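/- arXiv:1911.03467 — 12 statements merged into one kernel-verified Lean document; each statement's English description precedes it below -/
import Mathlib

section
/- Let t ∈ [−1,1]. Then Spearman's rho of the lower bound copula B̲_t equals ρ(B̲_t) = (3/16)(1+t)³ − 1; explicitly, 12·∫₀¹∫₀¹ B̲_t(u,v) du dv − 3 = (3/16)(1+t)³ − 1. -/
/-- The lower bound copula `B̲_t` of the set of copulas with Blomqvist's beta equal to `t`:
`B̲_t(u,v) = max{0, u+v−1, (1+t)/4 − (1/2−u)⁺ − (1/2−v)⁺}`. -/
noncomputable def Blower (t u v : ℝ) : ℝ :=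
  max (max 0 (u + v - 1)) ((1 + t) / 4 - max (1 / 2 - u) 0 - max (1 / 2 - v) 0)

/-!
The copula `B̲_t` exceeds the Fréchet–Hoeffding lower bound `W(u,v) = max(0, u+v-1)` exactly by a
pyramid of height `d = (1+t)/4` centred at `(1/2, 1/2)`, whose base is the hexagon
`max(|x|, |y|, |x+y|) ≤ d`. The hexagon has area `3d²`, so the pyramid has volume `d³`; since
`∫∫ W = 1/6`, this gives `ρ(B̲_t) = 12 (1/6 + d³) - 3`. The volume is computed by sections: the
section at `x` is a trapezoid of height `d - |x|` with parallel sides `|x|` and `2d - |x|`, hence of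
area `d (d - |x|)`.
-/

/-- The lower Fréchet–Hoeffding bound `W`, the copula of countermonotonic variables. -/
noncomputable def frechetLower (u v : ℝ) : ℝ := max 0 (u + v - 1)

/-- The trapezoidal bump of height `h` with plateau `[a, b]` and slopes `±1` on its two sides;
for `a = b` it is a tent. -/
noncomputable def trapezoid (a b h x : ℝ) : ℝ := max 0 (h - max 0 (a - x) - max 0 (x - b))

/-- The pyramid of height `d` over the hexagon `max(|x|, |y|, |x+y|) ≤ d`, extended by `0`. -/
noncomputable def hexPyramid (d x y : ℝ) : ℝ := max 0 (d - max |x| (max |y| |x + y|))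

theorem integral_integral_add_of_continuous {f g : ℝ → ℝ → ℝ}
    (hf : Continuous f.uncurry) (hg : Continuous g.uncurry) (a₁ b₁ a₂ b₂ : ℝ) :
    ∫ x in a₁..b₁, ∫ y in a₂..b₂, (f x y + g x y) =
      (∫ x in a₁..b₁, ∫ y in a₂..b₂, f x y) + ∫ x in a₁..b₁, ∫ y in a₂..b₂, g x y := by
  have integral_inner (x : ℝ) :
      ∫ y in a₂..b₂, (f x y + g x y) = (∫ y in a₂..b₂, f x y) + ∫ y in a₂..b₂, g x y :=
    intervalIntegral.integral_add ((hf.uncurry_left x).intervalIntegrable _ _)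
      ((hg.uncurry_left x).intervalIntegrable _ _)
  simp only [integral_inner]
  exact intervalIntegral.integral_add
    ((intervalIntegral.continuous_parametric_intervalIntegral_of_continuous' hf _ _)
      |>.intervalIntegrable _ _)
    ((intervalIntegral.continuous_parametric_intervalIntegral_of_continuous' hg _ _)
      |>.intervalIntegrable _ _)

theorem integral_max_zero_sub {l c r : ℝ} (hlc : l ≤ c) (hcr : c ≤ r) :
    ∫ x in l..r, max 0 (x - c) = (r - c) ^ 2 / 2 := by
  have integrable (a b : ℝ) :
      IntervalIntegrable (fun x ↦ max 0 (x - c)) MeasureTheory.volume a b :=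
    Continuous.intervalIntegrable (by fun_prop) a b
  have integral_left : ∫ x in l..c, max 0 (x - c) = ∫ _ in l..c, (0 : ℝ) :=
    intervalIntegral.integral_congr fun x hx ↦ by
      rw [Set.uIcc_of_le hlc] at hx
      exact max_eq_left (sub_nonpos.2 hx.2)
  have integral_right : ∫ x in c..r, max 0 (x - c) = ∫ x in c..r, (x - c) :=
    intervalIntegral.integral_congr fun x hx ↦ by
      rw [Set.uIcc_of_le hcr] at hx
      exact max_eq_right (sub_nonneg.2 hx.1)
  calc ∫ x in l..r, max 0 (x - c)
    _ = (∫ x in l..c, max 0 (x - c)) + ∫ x in c..r, max 0 (x - c) :=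
        (intervalIntegral.integral_add_adjacent_intervals (integrable l c) (integrable c r)).symm
    _ = (r - c) ^ 2 / 2 := by
        rw [integral_left, integral_right, intervalIntegral.integral_zero, zero_add,
          intervalIntegral.integral_comp_sub_right (fun x ↦ x), integral_id]
        ring

theorem integral_frechetLower {u : ℝ} (hu : u ∈ Set.Icc (0 : ℝ) 1) :
    ∫ v in (0 : ℝ)..1, frechetLower u v = u ^ 2 / 2 := by
  have frechetLower_eq (v : ℝ) : frechetLower u v = max 0 (v - (1 - u)) := by
    rw [frechetLower]
    ring_nf
  simp only [frechetLower_eq]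
  rw [integral_max_zero_sub (sub_nonneg.2 hu.2) (sub_le_self 1 hu.1), sub_sub_cancel]

theorem integral_integral_frechetLower :
    ∫ u in (0 : ℝ)..1, ∫ v in (0 : ℝ)..1, frechetLower u v = 1 / 6 := by
  calc ∫ u in (0 : ℝ)..1, ∫ v in (0 : ℝ)..1, frechetLower u v
    _ = ∫ u in (0 : ℝ)..1, u ^ 2 / 2 := intervalIntegral.integral_congr fun u hu ↦
        integral_frechetLower (by rwa [Set.uIcc_of_le zero_le_one] at hu)
    _ = 1 / 6 := by
        rw [intervalIntegral.integral_div, integral_pow]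
        norm_num

theorem trapezoid_eq_sum_max {a b h : ℝ} (hab : a ≤ b) (hh : 0 ≤ h) (x : ℝ) :
    trapezoid a b h x = (max 0 (x - (a - h)) - max 0 (x - a)) -
      (max 0 (x - b) - max 0 (x - (b + h))) := by
  grind [trapezoid]

theorem trapezoid_of_nonpos {h : ℝ} (hh : h ≤ 0) (a b x : ℝ) : trapezoid a b h x = 0 := by
  grind [trapezoid]

theorem integral_trapezoid {a b h l r : ℝ} (hab : a ≤ b) (hh : 0 ≤ h)
    (hl : l ≤ a - h) (hr : b + h ≤ r) :
    ∫ x in l..r, trapezoid a b h x = h * (b - a + h) := by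
  have integrable (c : ℝ) :
      IntervalIntegrable (fun x ↦ max 0 (x - c)) MeasureTheory.volume l r :=
    Continuous.intervalIntegrable (by fun_prop) l r
  simp only [trapezoid_eq_sum_max hab hh]
  rw [intervalIntegral.integral_sub ((integrable _).sub (integrable _))
      ((integrable _).sub (integrable _)),
    intervalIntegral.integral_sub (integrable _) (integrable _),
    intervalIntegral.integral_sub (integrable _) (integrable _),
    integral_max_zero_sub, integral_max_zero_sub, integral_max_zero_sub, integral_max_zero_sub]
  · ring
  all_goals linarith

theorem continuous_uncurry_hexPyramid (d : ℝ) : Continuous (hexPyramid d).uncurry := by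
  unfold hexPyramid Function.uncurry
  fun_prop

theorem hexPyramid_eq_trapezoid (d x y : ℝ) :
    hexPyramid d x y = trapezoid (min 0 (-x)) (max 0 (-x)) (d - |x|) y := by
  grind [hexPyramid, trapezoid]

theorem integral_hexPyramid {d l r : ℝ} (hl : l ≤ -d) (hr : d ≤ r) (x : ℝ) :
    ∫ y in l..r, hexPyramid d x y = d * trapezoid 0 0 d x := by
  simp only [hexPyramid_eq_trapezoid]
  rcases le_total |x| d with hx | hx
  · have plateau_length : max 0 (-x) - min 0 (-x) = |x| := by
      rw [max_sub_min_eq_abs', zero_sub, neg_neg]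
    have tent_eq : trapezoid 0 0 d x = d - |x| := by grind [trapezoid]
    rw [integral_trapezoid min_le_max (sub_nonneg.2 hx) (by grind) (by grind), plateau_length,
      tent_eq]
    ring
  · have tent_eq : trapezoid 0 0 d x = 0 := by grind [trapezoid]
    simp only [trapezoid_of_nonpos (sub_nonpos.2 hx), intervalIntegral.integral_zero, tent_eq,
      mul_zero]

theorem integral_integral_hexPyramid {d l₁ r₁ l₂ r₂ : ℝ} (hd : 0 ≤ d)
    (hl₁ : l₁ ≤ -d) (hr₁ : d ≤ r₁) (hl₂ : l₂ ≤ -d) (hr₂ : d ≤ r₂) :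
    ∫ x in l₁..r₁, ∫ y in l₂..r₂, hexPyramid d x y = d ^ 3 := by
  simp only [integral_hexPyramid hl₂ hr₂]
  rw [intervalIntegral.integral_const_mul,
    integral_trapezoid le_rfl hd (by linarith) (by linarith)]
  ring

theorem max_abs_abs_abs_add (x y : ℝ) :
    max |x| (max |y| |x + y|) = max (-x) 0 + max (-y) 0 + max 0 (x + y) := by
  grind

theorem Blower_eq_frechetLower_add_hexPyramid (t u v : ℝ) :
    Blower t u v = frechetLower u v + hexPyramid ((1 + t) / 4) (u - 1 / 2) (v - 1 / 2) := by
  have sum_eq : u - 1 / 2 + (v - 1 / 2) = u + v - 1 := by ring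
  rw [Blower, frechetLower, hexPyramid, max_abs_abs_abs_add, sum_eq, neg_sub, neg_sub,
    ← max_add_add_left, add_zero]
  congr 1
  ring

theorem integral_integral_hexPyramid_sub_half {d : ℝ} (hd : d ∈ Set.Icc (0 : ℝ) (1 / 2)) :
    ∫ u in (0 : ℝ)..1, ∫ v in (0 : ℝ)..1, hexPyramid d (u - 1 / 2) (v - 1 / 2) = d ^ 3 := by
  obtain ⟨hd₀, hd₁⟩ := hd
  simp only [intervalIntegral.integral_comp_sub_right (hexPyramid d _)]
  rw [intervalIntegral.integral_comp_sub_right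
    (fun x ↦ ∫ y in (0 - 1 / 2 : ℝ)..(1 - 1 / 2), hexPyramid d x y)]
  exact integral_integral_hexPyramid hd₀ (by linarith) (by linarith) (by linarith) (by linarith)

theorem integral_integral_Blower {t : ℝ} (ht : t ∈ Set.Icc (-1 : ℝ) 1) :
    ∫ u in (0 : ℝ)..1, ∫ v in (0 : ℝ)..1, Blower t u v = 1 / 6 + ((1 + t) / 4) ^ 3 := by
  have continuous_frechetLower : Continuous frechetLower.uncurry := by
    unfold frechetLower Function.uncurry
    fun_prop
  have continuous_pyramid : Continuous
      (fun u v ↦ hexPyramid ((1 + t) / 4) (u - 1 / 2) (v - 1 / 2)).uncurry :=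
    (continuous_uncurry_hexPyramid _).comp (g := (hexPyramid _).uncurry)
      (f := fun p : ℝ × ℝ ↦ (p.1 - 1 / 2, p.2 - 1 / 2)) (by fun_prop)
  have height_mem : (1 + t) / 4 ∈ Set.Icc (0 : ℝ) (1 / 2) :=
    ⟨by linarith [ht.1], by linarith [ht.2]⟩
  simp only [Blower_eq_frechetLower_add_hexPyramid]
  rw [integral_integral_add_of_continuous continuous_frechetLower continuous_pyramid,
    integral_integral_frechetLower, integral_integral_hexPyramid_sub_half height_mem]

/-- Spearman's rho of the lower bound copula `B̲_t` equals `(3/16)(1+t)³ − 1`. -/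
theorem rho_Blower (t : ℝ) (ht : t ∈ Set.Icc (-1 : ℝ) 1) :
    12 * (∫ u in (0:ℝ)..1, ∫ v in (0:ℝ)..1, Blower t u v) - 3
      = 3 / 16 * (1 + t) ^ 3 - 1 := by
  rw [integral_integral_Blower ht]
  ring
end

section
/- Let t ∈ [−1,1]. Then Spearman's rho of the upper bound copula B̄_t equals ρ(B̄_t) = 1 − (3/16)(1−t)³; explicitly, 12·∫₀¹∫₀¹ B̄_t(u,v) du dv − 3 = 1 − (3/16)(1−t)³. -/
/-- The upper bound copula `B̄_t` of the set of copulas with Blomqvist's beta equal to `t`: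
`B̄_t(u,v) = min{u, v, (1+t)/4 + (u−1/2)⁺ + (v−1/2)⁺}`. -/
noncomputable def Bupper (t u v : ℝ) : ℝ :=
  min (min u v) ((1 + t) / 4 + max (u - 1 / 2) 0 + max (v - 1 / 2) 0)

/-!
Put `a = (1 - t) / 4`. Since `max x 0 + max y 0 - min x y` is the hexagonal norm
`N(x, y) = max {|x|, |y|, |x - y|}`, the copula `B̄_t` is `min u v` minus the cone
`(a - N(u - 1/2, v - 1/2))⁺`. For `t ∈ [-1, 1]` the base of the cone fits into the unit square, so
its full volume is lost. That volume is `a³`: a section of the cone is a trapezoid, hence the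
difference of two tents `(r - |y - m|)⁺`, each of area `r²`. Thus `∫∫ B̄_t = 1/3 - a³` and
`ρ = 1 - 12 a³`.
-/

section

open MeasureTheory intervalIntegral Set

theorem integral_Ioi_max_sub_zero {r : ℝ} (hr : 0 ≤ r) :
    ∫ x in Ioi 0, max (r - x) 0 = r ^ 2 / 2 := by
  have vanishes : ∀ x ∈ Ioi 0 \ Ioc 0 r, max (r - x) 0 = 0 := by
    rintro x ⟨hx, hxr⟩
    have : r < x := by simpa [mem_Ioi.mp hx] using hxr
    exact max_eq_right (by linarith)
  have on_interval : EqOn (fun x ↦ max (r - x) 0) (fun x ↦ r - x) (uIcc 0 r) := by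
    intro x hx
    rw [uIcc_of_le hr] at hx
    exact max_eq_left (sub_nonneg.mpr hx.2)
  rw [setIntegral_eq_of_subset_of_forall_sdiff_eq_zero measurableSet_Ioi Ioc_subset_Ioi_self
    vanishes, ← integral_of_le hr, integral_congr on_interval,
    intervalIntegral.integral_sub (by simp) (by simp), intervalIntegral.integral_const, integral_id,
    smul_eq_mul]
  ring

/-- The tent function of height `r` and slope `1`, supported on `[-r, r]` (and identically zero for
`r ≤ 0`). Sections of `hexCone` below are differences of two tents. -/
def tent (r x : ℝ) : ℝ := max (r - |x|) 0

@[fun_prop]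
theorem continuous_tent (r : ℝ) : Continuous (tent r) := by
  unfold tent
  fun_prop

theorem tent_of_abs_le {r x : ℝ} (hx : |x| ≤ r) : tent r x = r - |x| :=
  max_eq_left (sub_nonneg.mpr hx)

theorem tent_of_le_abs {r x : ℝ} (hx : r ≤ |x|) : tent r x = 0 :=
  max_eq_right (sub_nonpos.mpr hx)

theorem integral_tent_sub {r m p q : ℝ} (hr : 0 ≤ r) (hp : p ≤ m - r) (hq : m + r ≤ q) :
    ∫ x in p..q, tent r (x - m) = r ^ 2 := by
  have support_subset : (fun x ↦ tent r (x - m)).support ⊆ Ioc p q := by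
    intro x hx
    have : |x - m| < r := by
      by_contra! h
      exact hx (tent_of_le_abs h)
    obtain ⟨h₁, h₂⟩ := abs_lt.mp this
    exact ⟨by linarith, by linarith⟩
  calc ∫ x in p..q, tent r (x - m)
      = ∫ x, tent r (x - m) := integral_eq_integral_of_support_subset support_subset
    _ = ∫ x, tent r x := integral_sub_right_eq_self (tent r) m
    _ = 2 * ∫ x in Ioi 0, max (r - x) 0 := integral_comp_abs (f := fun x ↦ max (r - x) 0)
    _ = r ^ 2 := by rw [integral_Ioi_max_sub_zero hr]; ring

theorem integral_min_left {u b : ℝ} (hu : 0 ≤ u) (hub : u ≤ b) :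
    ∫ v in (0 : ℝ)..b, min u v = u * b - u ^ 2 / 2 := by
  have below : EqOn (fun v ↦ min u v) (fun v ↦ v) (uIcc 0 u) := by
    intro v hv
    rw [uIcc_of_le hu] at hv
    exact min_eq_right hv.2
  have above : EqOn (fun v ↦ min u v) (fun _ ↦ u) (uIcc u b) := by
    intro v hv
    rw [uIcc_of_le hub] at hv
    exact min_eq_left hv.1
  have integrable (c d : ℝ) : IntervalIntegrable (fun v ↦ min u v) volume c d :=
    Continuous.intervalIntegrable (by fun_prop) c d
  rw [← integral_add_adjacent_intervals (integrable 0 u) (integrable u b), integral_congr below,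
    integral_congr above, integral_id, intervalIntegral.integral_const, smul_eq_mul]
  ring

theorem integral_integral_min {b : ℝ} (hb : 0 ≤ b) :
    ∫ u in (0 : ℝ)..b, ∫ v in (0 : ℝ)..b, min u v = b ^ 3 / 3 := by
  have sections : EqOn (fun u ↦ ∫ v in (0 : ℝ)..b, min u v) (fun u ↦ u * b - u ^ 2 / 2)
      (uIcc 0 b) := by
    intro u hu
    rw [uIcc_of_le hb] at hu
    exact integral_min_left hu.1 hu.2
  rw [integral_congr sections, integral_sub (Continuous.intervalIntegrable (by fun_prop) 0 b)
    (Continuous.intervalIntegrable (by fun_prop) 0 b), intervalIntegral.integral_mul_const,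
    intervalIntegral.integral_div, integral_id, integral_pow]
  ring

theorem integral_integral_sub_of_continuous {E : Type*} [NormedAddCommGroup E] [NormedSpace ℝ E]
    {f g : ℝ → ℝ → E} (hf : Continuous f.uncurry) (hg : Continuous g.uncurry) (p q c d : ℝ) :
    ∫ x in p..q, ∫ y in c..d, (f x y - g x y) =
      (∫ x in p..q, ∫ y in c..d, f x y) - ∫ x in p..q, ∫ y in c..d, g x y := by
  have section_sub (x : ℝ) :
      ∫ y in c..d, (f x y - g x y) = (∫ y in c..d, f x y) - ∫ y in c..d, g x y :=
    integral_sub (hf.uncurry_left x |>.intervalIntegrable c d)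
      (hg.uncurry_left x |>.intervalIntegrable c d)
  simp_rw [section_sub]
  exact integral_sub
    ((continuous_parametric_intervalIntegral_of_continuous' hf c d).intervalIntegrable p q)
    ((continuous_parametric_intervalIntegral_of_continuous' hg c d).intervalIntegrable p q)

/-- The norm on `ℝ²` whose unit ball is the hexagon with vertices `±(1, 0)`, `±(0, 1)`, `±(1, 1)`,
taken as a function of the two coordinates. -/
def hexNorm (x y : ℝ) : ℝ := max |x| (max |y| |x - y|)

/-- The height at `(x, y)` of the cone of height `a` over the `hexNorm`-ball of radius `a`, extended
by zero outside that ball. For `a = (1 - t) / 4`, centred at `(1/2, 1/2)`, this is the amount by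
which `B̄_t` falls short of the comonotonicity copula `min u v`. -/
def hexCone (a x y : ℝ) : ℝ := max (a - hexNorm x y) 0

theorem continuous_hexCone (a : ℝ) : Continuous (hexCone a).uncurry := by
  unfold hexCone hexNorm Function.uncurry
  fun_prop

theorem hexNorm_eq_max_add_max_sub_min (x y : ℝ) :
    hexNorm x y = max x 0 + max y 0 - min x y := by
  grind [hexNorm]

theorem hexNorm_eq_max_abs_abs_sub_half_add_half (x y : ℝ) :
    hexNorm x y = max |x| (|y - x / 2| + |x| / 2) := by
  grind [hexNorm]

theorem hexCone_eq_zero_of_le_abs {a x : ℝ} (hx : a ≤ |x|) (y : ℝ) : hexCone a x y = 0 :=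
  max_eq_right (sub_nonpos.mpr (hx.trans (le_max_left _ _)))

theorem hexCone_eq_tent_sub_tent {a x : ℝ} (hx : |x| ≤ a) (y : ℝ) :
    hexCone a x y = tent (a - |x| / 2) (y - x / 2) - tent (|x| / 2) (y - x / 2) := by
  rw [hexCone, hexNorm_eq_max_abs_abs_sub_half_add_half]
  rcases le_total |y - x / 2| (|x| / 2) with plateau | slope
  · rw [tent_of_abs_le plateau, tent_of_abs_le (by linarith),
      max_eq_left (b := _ + _) (by linarith), max_eq_left (sub_nonneg.mpr hx)]
    ring
  · rw [tent_of_le_abs slope, max_eq_right (a := |x|) (by linarith), sub_zero, tent, add_comm,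
      sub_add_eq_sub_sub]

theorem integral_hexCone {a p q : ℝ} (hp : p ≤ -a) (hq : a ≤ q) (x : ℝ) :
    ∫ y in p..q, hexCone a x y = a * tent a x := by
  rcases le_total a |x| with hx | hx
  · simp [hexCone_eq_zero_of_le_abs hx, tent_of_le_abs hx]
  · have neg_abs_le_self : -|x| ≤ x := neg_abs_le x
    have self_le_abs : x ≤ |x| := le_abs_self x
    have wide_tent : ∫ y in p..q, tent (a - |x| / 2) (y - x / 2) = (a - |x| / 2) ^ 2 :=
      integral_tent_sub (by linarith) (by linarith) (by linarith)
    have narrow_tent : ∫ y in p..q, tent (|x| / 2) (y - x / 2) = (|x| / 2) ^ 2 :=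
      integral_tent_sub (by linarith) (by linarith) (by linarith)
    simp_rw [hexCone_eq_tent_sub_tent hx]
    rw [integral_sub (Continuous.intervalIntegrable (by fun_prop) p q)
      (Continuous.intervalIntegrable (by fun_prop) p q), wide_tent, narrow_tent, tent_of_abs_le hx]
    ring

theorem integral_integral_hexCone {a p q c d : ℝ} (ha : 0 ≤ a)
    (hp : p ≤ -a) (hq : a ≤ q) (hc : c ≤ -a) (hd : a ≤ d) :
    ∫ x in p..q, ∫ y in c..d, hexCone a x y = a ^ 3 := by
  have base_tent : ∫ x in p..q, tent a x = a ^ 2 := by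
    simpa using integral_tent_sub (m := 0) ha (by simpa using hp) (by simpa using hq)
  simp_rw [integral_hexCone hc hd, intervalIntegral.integral_const_mul, base_tent]
  ring

theorem Bupper_eq_min_sub_hexCone (t u v : ℝ) :
    Bupper t u v = min u v - hexCone ((1 - t) / 4) (u - 1 / 2) (v - 1 / 2) := by
  rw [Bupper, inf_eq_sub_posPart_sub, posPart_def, hexCone, hexNorm_eq_max_add_max_sub_min,
    min_sub_sub_right]
  congr 2
  ring

theorem integral_integral_Bupper {t : ℝ} (ht : t ∈ Icc (-1 : ℝ) 1) :
    ∫ u in (0 : ℝ)..1, ∫ v in (0 : ℝ)..1, Bupper t u v = 1 / 3 - ((1 - t) / 4) ^ 3 := by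
  obtain ⟨neg_one_le, le_one⟩ := ht
  have cone_volume : ∫ u in (0 : ℝ)..1, ∫ v in (0 : ℝ)..1,
      hexCone ((1 - t) / 4) (u - 1 / 2) (v - 1 / 2) = ((1 - t) / 4) ^ 3 := by
    simp_rw [integral_comp_sub_right (hexCone _ _) (1 / 2)]
    rw [integral_comp_sub_right (fun x ↦ ∫ y in _.._, hexCone _ x y) (1 / 2)]
    apply integral_integral_hexCone <;> linarith
  have hexCone_continuous : Continuous
      (Function.uncurry fun u v ↦ hexCone ((1 - t) / 4) (u - 1 / 2) (v - 1 / 2)) :=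
    (continuous_hexCone _).comp (f := fun z : ℝ × ℝ ↦ (z.1 - 1 / 2, z.2 - 1 / 2)) (by fun_prop)
  simp_rw [Bupper_eq_min_sub_hexCone]
  rw [integral_integral_sub_of_continuous (f := min) continuous_min hexCone_continuous,
    integral_integral_min zero_le_one, cone_volume, one_pow]

end

/-- Spearman's rho of the upper bound copula `B̄_t` equals `1 − (3/16)(1−t)³`. -/
theorem rho_Bupper (t : ℝ) (ht : t ∈ Set.Icc (-1 : ℝ) 1) :
    12 * (∫ u in (0:ℝ)..1, ∫ v in (0:ℝ)..1, Bupper t u v) - 3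
      = 1 - 3 / 16 * (1 - t) ^ 3 := by
  rw [integral_integral_Bupper ht]
  ring
end

section
/- Let C be a copula, let ρ = ρ(C) = 12·∫₀¹∫₀¹ C(u,v) du dv − 3 and β(C) = 4·C(1/2,1/2) − 1. Then β(C) is bounded below by −1 if ρ ≤ −1/2 and by 1 − 2·(2(1−ρ)/3)^{1/3} if ρ > −1/2, and β(C) is bounded above by 1 if ρ ≥ 1/2 and by −1 + 2·(2(1+ρ)/3)^{1/3} if ρ < 1/2. -/
/-- A (bivariate) copula: boundary conditions on `[0,1]` and the 2-increasing property. -/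
def IsCopula (C : ℝ → ℝ → ℝ) : Prop :=
  (∀ u ∈ Set.Icc (0:ℝ) 1, C u 0 = 0 ∧ C 0 u = 0 ∧ C u 1 = u ∧ C 1 u = u) ∧
  (∀ u₁ u₂ v₁ v₂ : ℝ, 0 ≤ u₁ → u₁ ≤ u₂ → u₂ ≤ 1 → 0 ≤ v₁ → v₁ ≤ v₂ → v₂ ≤ 1 →
    0 ≤ C u₁ v₁ + C u₂ v₂ - C u₁ v₂ - C u₂ v₁)

/-- Spearman's rho of a copula. -/
noncomputable def spearmanRho (C : ℝ → ℝ → ℝ) : ℝ :=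
  12 * (∫ u in (0:ℝ)..1, ∫ v in (0:ℝ)..1, C u v) - 3

/-- Blomqvist's beta of a copula. -/
noncomputable def blomqvistBeta (C : ℝ → ℝ → ℝ) : ℝ :=
  4 * C (1/2) (1/2) - 1

/-!
Write `S(u, v) = 1 - u - v + C(u, v)` and fix `(a, b)` in the unit square. A section of a copula is
monotone and `1`-Lipschitz, so on an interval it stays above its left value and above the line of
slope `1` through its right endpoint. Integrating this over `[0, b]` and `[b, 1]` gives
`∫ C(u, v) dv ≥ u² / 2 + C(u, b) S(u, b)`. Here `S(·, b)` decreases and `C(·, b)` increases, so the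
product is at least `C(u, b) S(a, b)` for `u ≤ a` and `C(a, b) S(u, b)` for `u ≥ a`; the same
estimate in the first variable yields `∫∫ C ≥ 1/6 + C(a, b) S(a, b) (C(a, b) + S(a, b)) / 2`. At
`a = b = 1/2` the right-hand side is `1/6 + C(1/2, 1/2)³`, which is the upper bound on `β`. The
lower bound is the upper bound for the reflected copula `u - C(u, 1 - v)`, whose `ρ` and `β` are the
negatives of those of `C`.
-/

open MeasureTheory Set
open scoped NNReal

theorem integral_sub_mul_sub (m k c b : ℝ) :
    ∫ x in c..b, (m - k * (b - x)) = m * (b - c) - k * (b - c) ^ 2 / 2 := by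
  rw [intervalIntegral.integral_sub (by simp) (Continuous.intervalIntegrable (by fun_prop) _ _),
    intervalIntegral.integral_const_mul, intervalIntegral.integral_comp_sub_left (fun x ↦ x)]
  simp only [intervalIntegral.integral_const, integral_id, smul_eq_mul]
  ring

theorem integral_sq_div_two_add_mul {f : ℝ → ℝ} {a b : ℝ} (c : ℝ)
    (hf : IntervalIntegrable f volume a b) :
    ∫ u in a..b, (u ^ 2 / 2 + c * f u) = (b ^ 3 - a ^ 3) / 6 + c * ∫ u in a..b, f u := by
  rw [intervalIntegral.integral_add (Continuous.intervalIntegrable (by fun_prop) _ _)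
    (hf.const_mul c), intervalIntegral.integral_const_mul, intervalIntegral.integral_div,
    integral_pow]
  ring

theorem mul_sub_add_sq_div_le_integral_of_monotoneOn_of_lipschitzOnWith {f : ℝ → ℝ} {a b : ℝ}
    {K : ℝ≥0} (hab : a ≤ b) (hK : 0 < K) (hmono : MonotoneOn f (Icc a b))
    (hlip : LipschitzOnWith K f (Icc a b)) :
    f a * (b - a) + (f b - f a) ^ 2 / (2 * K) ≤ ∫ x in a..b, f x := by
  have ha : a ∈ Icc a b := left_mem_Icc.mpr hab
  have hb : b ∈ Icc a b := right_mem_Icc.mpr hab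
  have hK' : (0 : ℝ) < K := hK
  have line_le {x : ℝ} (hx : x ∈ Icc a b) : f b - K * (b - x) ≤ f x := by
    have := hlip.le_add_mul hb hx
    rw [Real.dist_eq, abs_of_nonneg (sub_nonneg.mpr hx.2)] at this
    linarith
  -- The line of slope `K` through `(b, f b)` reaches the height `f a` at `c`.
  obtain ⟨c, hc⟩ : ∃ c, c = b - (f b - f a) / K := ⟨_, rfl⟩
  have hcb : c ≤ b := hc ▸ sub_le_self b (div_nonneg (sub_nonneg.mpr (hmono ha hb hab)) hK'.le)
  have hac : a ≤ c := by
    rw [hc, le_sub_comm, div_le_iff₀' hK']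
    linarith [line_le ha]
  have hint_left : IntervalIntegrable f volume a c :=
    (hmono.mono (uIcc_of_le hac ▸ Icc_subset_Icc_right hcb)).intervalIntegrable
  have hint_right : IntervalIntegrable f volume c b :=
    (hmono.mono (uIcc_of_le hcb ▸ Icc_subset_Icc_left hac)).intervalIntegrable
  have hleft : ∫ _ in a..c, f a ≤ ∫ x in a..c, f x :=
    intervalIntegral.integral_mono_on hac intervalIntegrable_const hint_left
      fun x hx ↦ hmono ha ⟨hx.1, hx.2.trans hcb⟩ hx.1
  have hright : ∫ x in c..b, (f b - K * (b - x)) ≤ ∫ x in c..b, f x :=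
    intervalIntegral.integral_mono_on hcb (Continuous.intervalIntegrable (by fun_prop) _ _)
      hint_right fun x hx ↦ line_le ⟨hac.trans hx.1, hx.2⟩
  calc f a * (b - a) + (f b - f a) ^ 2 / (2 * K)
      = (∫ _ in a..c, f a) + ∫ x in c..b, (f b - K * (b - x)) := by
        rw [integral_sub_mul_sub, intervalIntegral.integral_const, smul_eq_mul, hc]
        field_simp
        ring
    _ ≤ (∫ x in a..c, f x) + ∫ x in c..b, f x := add_le_add hleft hright
    _ = ∫ x in a..b, f x :=
        intervalIntegral.integral_add_adjacent_intervals hint_left hint_right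

/-- The joint survival function of `C`: the probability of `U > u` and `V > v` when `U` and `V` are
uniform on `[0, 1]` with joint distribution function `C`. -/
def jointSurvival (C : ℝ → ℝ → ℝ) (u v : ℝ) : ℝ :=
  1 - u - v + C u v

/-- The reflection of `C` in its second argument: the copula of `(U, 1 - V)` when `(U, V)` has
copula `C`. It exchanges the upper and the lower bounds. -/
def copulaReflection (C : ℝ → ℝ → ℝ) (u v : ℝ) : ℝ :=
  u - C u (1 - v)

theorem blomqvistBeta_copulaReflection (C : ℝ → ℝ → ℝ) :
    blomqvistBeta (copulaReflection C) = -blomqvistBeta C := by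
  simp only [blomqvistBeta, copulaReflection, sub_half]
  ring

namespace IsCopula

variable {C : ℝ → ℝ → ℝ} {a b u v : ℝ}

theorem apply_zero_right (hC : IsCopula C) (hu : u ∈ Icc (0 : ℝ) 1) : C u 0 = 0 :=
  (hC.1 u hu).1

theorem apply_zero_left (hC : IsCopula C) (hv : v ∈ Icc (0 : ℝ) 1) : C 0 v = 0 :=
  (hC.1 v hv).2.1

theorem apply_one_right (hC : IsCopula C) (hu : u ∈ Icc (0 : ℝ) 1) : C u 1 = u :=
  (hC.1 u hu).2.2.1

theorem apply_one_left (hC : IsCopula C) (hv : v ∈ Icc (0 : ℝ) 1) : C 1 v = v :=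
  (hC.1 v hv).2.2.2

theorem swap (hC : IsCopula C) : IsCopula fun u v ↦ C v u := by
  refine ⟨fun u hu ↦ ?_, fun u₁ u₂ v₁ v₂ hu₁ hu hu₂ hv₁ hv hv₂ ↦ ?_⟩
  · exact ⟨hC.apply_zero_left hu, hC.apply_zero_right hu, hC.apply_one_left hu,
      hC.apply_one_right hu⟩
  · linarith [hC.2 v₁ v₂ u₁ u₂ hv₁ hv hv₂ hu₁ hu hu₂]

theorem monotoneOn_right (hC : IsCopula C) (hu : u ∈ Icc (0 : ℝ) 1) :
    MonotoneOn (C u) (Icc 0 1) := by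
  intro v hv w hw hvw
  have := hC.2 0 u v w le_rfl hu.1 hu.2 hv.1 hvw hw.2
  rw [hC.apply_zero_left hv, hC.apply_zero_left hw] at this
  linarith

theorem monotoneOn_left (hC : IsCopula C) (hv : v ∈ Icc (0 : ℝ) 1) :
    MonotoneOn (C · v) (Icc 0 1) :=
  hC.swap.monotoneOn_right hv

theorem antitoneOn_jointSurvival_right (hC : IsCopula C) (hu : u ∈ Icc (0 : ℝ) 1) :
    AntitoneOn (jointSurvival C u) (Icc 0 1) := by
  intro v hv w hw hvw
  have := hC.2 u 1 v w hu.1 hu.2 le_rfl hv.1 hvw hw.2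
  rw [hC.apply_one_left hv, hC.apply_one_left hw] at this
  simp only [jointSurvival]
  linarith

theorem antitoneOn_jointSurvival_left (hC : IsCopula C) (hv : v ∈ Icc (0 : ℝ) 1) :
    AntitoneOn (jointSurvival C · v) (Icc 0 1) := by
  intro x hx y hy hxy
  have := hC.swap.antitoneOn_jointSurvival_right hv hx hy hxy
  simp only [jointSurvival] at this ⊢
  linarith

theorem lipschitzOnWith_right (hC : IsCopula C) (hu : u ∈ Icc (0 : ℝ) 1) :
    LipschitzOnWith 1 (C u) (Icc 0 1) := by
  refine LipschitzOnWith.of_le_add fun v hv w hw ↦ ?_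
  rcases le_total v w with hvw | hwv
  · exact (hC.monotoneOn_right hu hv hw hvw).trans (le_add_of_nonneg_right dist_nonneg)
  · have := hC.antitoneOn_jointSurvival_right hu hw hv hwv
    simp only [jointSurvival] at this
    rw [Real.dist_eq, abs_of_nonneg (sub_nonneg.mpr hwv)]
    linarith

theorem nonneg (hC : IsCopula C) (hu : u ∈ Icc (0 : ℝ) 1) (hv : v ∈ Icc (0 : ℝ) 1) :
    0 ≤ C u v :=
  hC.apply_zero_right hu ▸ hC.monotoneOn_right hu unitInterval.zero_mem hv hv.1

theorem le_left (hC : IsCopula C) (hu : u ∈ Icc (0 : ℝ) 1) (hv : v ∈ Icc (0 : ℝ) 1) :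
    C u v ≤ u :=
  (hC.monotoneOn_right hu hv unitInterval.one_mem hv.2).trans_eq (hC.apply_one_right hu)

theorem jointSurvival_nonneg (hC : IsCopula C) (hu : u ∈ Icc (0 : ℝ) 1) (hv : v ∈ Icc (0 : ℝ) 1) :
    0 ≤ jointSurvival C u v := by
  have := hC.antitoneOn_jointSurvival_right hu hv unitInterval.one_mem hv.2
  simpa [jointSurvival, hC.apply_one_right hu] using this

theorem mul_sub_add_sq_le_integral_right (hC : IsCopula C) (hu : u ∈ Icc (0 : ℝ) 1)
    (ha : 0 ≤ a) (hab : a ≤ b) (hb : b ≤ 1) :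
    C u a * (b - a) + (C u b - C u a) ^ 2 / 2 ≤ ∫ v in a..b, C u v := by
  have hsub : Icc a b ⊆ Icc 0 1 := Icc_subset_Icc ha hb
  simpa using mul_sub_add_sq_div_le_integral_of_monotoneOn_of_lipschitzOnWith hab zero_lt_one
    ((hC.monotoneOn_right hu).mono hsub) ((hC.lipschitzOnWith_right hu).mono hsub)

theorem intervalIntegrable_right (hC : IsCopula C) (hu : u ∈ Icc (0 : ℝ) 1)
    (ha : a ∈ Icc (0 : ℝ) 1) (hb : b ∈ Icc (0 : ℝ) 1) : IntervalIntegrable (C u) volume a b :=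
  ((hC.monotoneOn_right hu).mono (uIcc_subset_Icc ha hb)).intervalIntegrable

theorem monotoneOn_integral_right (hC : IsCopula C) :
    MonotoneOn (fun u ↦ ∫ v in (0 : ℝ)..1, C u v) (Icc 0 1) := by
  have hint {x : ℝ} (hx : x ∈ Icc (0 : ℝ) 1) : IntervalIntegrable (C x) volume 0 1 :=
    hC.intervalIntegrable_right hx unitInterval.zero_mem unitInterval.one_mem
  intro x hx y hy hxy
  exact intervalIntegral.integral_mono_on zero_le_one (hint hx) (hint hy)
    fun v hv ↦ hC.monotoneOn_left hv hx hy hxy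

theorem intervalIntegrable_integral_right (hC : IsCopula C) (ha : a ∈ Icc (0 : ℝ) 1)
    (hb : b ∈ Icc (0 : ℝ) 1) :
    IntervalIntegrable (fun u ↦ ∫ v in (0 : ℝ)..1, C u v) volume a b :=
  (hC.monotoneOn_integral_right.mono (uIcc_subset_Icc ha hb)).intervalIntegrable

theorem sq_div_two_add_mul_jointSurvival_le_integral_right (hC : IsCopula C)
    (hu : u ∈ Icc (0 : ℝ) 1) (hb : b ∈ Icc (0 : ℝ) 1) :
    u ^ 2 / 2 + C u b * jointSurvival C u b ≤ ∫ v in (0 : ℝ)..1, C u v := by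
  have hbelow := hC.mul_sub_add_sq_le_integral_right hu le_rfl hb.1 hb.2
  have habove := hC.mul_sub_add_sq_le_integral_right hu hb.1 hb.2 le_rfl
  rw [hC.apply_zero_right hu] at hbelow
  rw [hC.apply_one_right hu] at habove
  rw [← intervalIntegral.integral_add_adjacent_intervals
    (hC.intervalIntegrable_right hu unitInterval.zero_mem hb)
    (hC.intervalIntegrable_right hu hb unitInterval.one_mem)]
  refine le_of_eq_of_le ?_ (add_le_add hbelow habove)
  simp only [jointSurvival]
  ring

theorem sq_div_two_le_integral_left (hC : IsCopula C) (ha : a ∈ Icc (0 : ℝ) 1)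
    (hb : b ∈ Icc (0 : ℝ) 1) : C a b ^ 2 / 2 ≤ ∫ u in (0 : ℝ)..a, C u b := by
  simpa [hC.apply_zero_left hb] using
    hC.swap.mul_sub_add_sq_le_integral_right hb le_rfl ha.1 ha.2

theorem sq_div_two_le_integral_jointSurvival_left (hC : IsCopula C) (ha : a ∈ Icc (0 : ℝ) 1)
    (hb : b ∈ Icc (0 : ℝ) 1) :
    jointSurvival C a b ^ 2 / 2 ≤ ∫ u in a..1, jointSurvival C u b := by
  have hle := hC.swap.mul_sub_add_sq_le_integral_right hb ha.1 ha.2 le_rfl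
  rw [hC.apply_one_left hb] at hle
  have hline : ∫ u in a..1, (-b + (1 - u)) = -b * (1 - a) + (1 - a) ^ 2 / 2 := by
    simpa [sub_eq_add_neg, neg_div] using integral_sub_mul_sub (-b) (-1) a 1
  calc jointSurvival C a b ^ 2 / 2
      = -b * (1 - a) + (1 - a) ^ 2 / 2 + (C a b * (1 - a) + (b - C a b) ^ 2 / 2) := by
        simp only [jointSurvival]
        ring
    _ ≤ (∫ u in a..1, (-b + (1 - u))) + ∫ u in a..1, C u b := by
        rw [hline]
        exact add_le_add_right hle _
    _ = ∫ u in a..1, jointSurvival C u b := by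
        rw [← intervalIntegral.integral_add (Continuous.intervalIntegrable (by fun_prop) _ _)
          (hC.swap.intervalIntegrable_right hb ha unitInterval.one_mem)]
        simp only [jointSurvival, neg_add_eq_sub]

theorem cube_div_six_add_mul_sq_le_integral_integral (hC : IsCopula C) (ha : a ∈ Icc (0 : ℝ) 1)
    (hb : b ∈ Icc (0 : ℝ) 1) :
    a ^ 3 / 6 + jointSurvival C a b * (C a b ^ 2 / 2) ≤
      ∫ u in (0 : ℝ)..a, ∫ v in (0 : ℝ)..1, C u v := by
  have hzero : (0 : ℝ) ∈ Icc (0 : ℝ) 1 := unitInterval.zero_mem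
  have hint : IntervalIntegrable (C · b) volume 0 a :=
    hC.swap.intervalIntegrable_right hb hzero ha
  calc a ^ 3 / 6 + jointSurvival C a b * (C a b ^ 2 / 2)
      ≤ a ^ 3 / 6 + jointSurvival C a b * ∫ u in (0 : ℝ)..a, C u b := by
        gcongr
        · exact hC.jointSurvival_nonneg ha hb
        · exact hC.sq_div_two_le_integral_left ha hb
    _ = ∫ u in (0 : ℝ)..a, (u ^ 2 / 2 + jointSurvival C a b * C u b) := by
        simp [integral_sq_div_two_add_mul _ hint]
    _ ≤ ∫ u in (0 : ℝ)..a, ∫ v in (0 : ℝ)..1, C u v := by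
        refine intervalIntegral.integral_mono_on ha.1
          ((Continuous.intervalIntegrable (by fun_prop) _ _).add (hint.const_mul _))
          (hC.intervalIntegrable_integral_right hzero ha) fun u hu ↦ ?_
        have hu' : u ∈ Icc (0 : ℝ) 1 := ⟨hu.1, hu.2.trans ha.2⟩
        refine le_trans ?_ (hC.sq_div_two_add_mul_jointSurvival_le_integral_right hu' hb)
        rw [mul_comm (C u b)]
        gcongr
        · exact hC.nonneg hu' hb
        · exact hC.antitoneOn_jointSurvival_left hb hu' ha hu.2

theorem one_sub_cube_div_six_add_mul_sq_le_integral_integral (hC : IsCopula C)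
    (ha : a ∈ Icc (0 : ℝ) 1) (hb : b ∈ Icc (0 : ℝ) 1) :
    (1 - a ^ 3) / 6 + C a b * (jointSurvival C a b ^ 2 / 2) ≤
      ∫ u in a..1, ∫ v in (0 : ℝ)..1, C u v := by
  have hone : (1 : ℝ) ∈ Icc (0 : ℝ) 1 := unitInterval.one_mem
  have hint : IntervalIntegrable (jointSurvival C · b) volume a 1 :=
    ((hC.antitoneOn_jointSurvival_left hb).mono (uIcc_subset_Icc ha hone)).intervalIntegrable
  calc (1 - a ^ 3) / 6 + C a b * (jointSurvival C a b ^ 2 / 2)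
      ≤ (1 - a ^ 3) / 6 + C a b * ∫ u in a..1, jointSurvival C u b := by
        gcongr
        · exact hC.nonneg ha hb
        · exact hC.sq_div_two_le_integral_jointSurvival_left ha hb
    _ = ∫ u in a..1, (u ^ 2 / 2 + C a b * jointSurvival C u b) := by
        simp [integral_sq_div_two_add_mul _ hint]
    _ ≤ ∫ u in a..1, ∫ v in (0 : ℝ)..1, C u v := by
        refine intervalIntegral.integral_mono_on ha.2
          ((Continuous.intervalIntegrable (by fun_prop) _ _).add (hint.const_mul _))
          (hC.intervalIntegrable_integral_right ha hone) fun u hu ↦ ?_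
        have hu' : u ∈ Icc (0 : ℝ) 1 := ⟨ha.1.trans hu.1, hu.2⟩
        refine le_trans ?_ (hC.sq_div_two_add_mul_jointSurvival_le_integral_right hu' hb)
        gcongr
        · exact hC.jointSurvival_nonneg hu' hb
        · exact hC.monotoneOn_left hb ha hu' hu.1

theorem one_sixth_add_le_integral_integral (hC : IsCopula C) (ha : a ∈ Icc (0 : ℝ) 1)
    (hb : b ∈ Icc (0 : ℝ) 1) :
    1 / 6 + C a b * jointSurvival C a b * (C a b + jointSurvival C a b) / 2 ≤
      ∫ u in (0 : ℝ)..1, ∫ v in (0 : ℝ)..1, C u v := by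
  rw [← intervalIntegral.integral_add_adjacent_intervals
    (hC.intervalIntegrable_integral_right unitInterval.zero_mem ha)
    (hC.intervalIntegrable_integral_right ha unitInterval.one_mem)]
  refine le_of_eq_of_le ?_
    (add_le_add (hC.cube_div_six_add_mul_sq_le_integral_integral ha hb)
      (hC.one_sub_cube_div_six_add_mul_sq_le_integral_integral ha hb))
  ring

theorem neg_one_le_blomqvistBeta (hC : IsCopula C) : -1 ≤ blomqvistBeta C := by
  have := hC.nonneg (u := 1 / 2) (v := 1 / 2) (by norm_num) (by norm_num)
  unfold blomqvistBeta
  linarith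

theorem blomqvistBeta_le_one (hC : IsCopula C) : blomqvistBeta C ≤ 1 := by
  have := hC.le_left (u := 1 / 2) (v := 1 / 2) (by norm_num) (by norm_num)
  unfold blomqvistBeta
  linarith

theorem one_add_blomqvistBeta_div_two_pow_three_le (hC : IsCopula C) :
    ((1 + blomqvistBeta C) / 2) ^ 3 ≤ 2 * (1 + spearmanRho C) / 3 := by
  have hle := hC.one_sixth_add_le_integral_integral (a := 1 / 2) (b := 1 / 2)
    (by norm_num) (by norm_num)
  have hdiag : jointSurvival C (1 / 2) (1 / 2) = C (1 / 2) (1 / 2) := by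
    norm_num [jointSurvival]
  rw [hdiag] at hle
  unfold blomqvistBeta spearmanRho
  linarith

theorem blomqvistBeta_le_neg_one_add_rpow (hC : IsCopula C) :
    blomqvistBeta C ≤ -1 + 2 * (2 * (1 + spearmanRho C) / 3) ^ ((1 : ℝ) / 3) := by
  have hcube := hC.one_add_blomqvistBeta_div_two_pow_three_le
  have hnonneg : 0 ≤ (1 + blomqvistBeta C) / 2 := by linarith [hC.neg_one_le_blomqvistBeta]
  have hroot : (1 + blomqvistBeta C) / 2 ≤ (2 * (1 + spearmanRho C) / 3) ^ ((1 : ℝ) / 3) := by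
    rw [one_div, Real.le_rpow_inv_iff_of_pos hnonneg ((pow_nonneg hnonneg 3).trans hcube)
      three_pos]
    exact_mod_cast hcube
  linarith

theorem reflection (hC : IsCopula C) : IsCopula (copulaReflection C) := by
  refine ⟨fun u hu ↦ ?_, fun u₁ u₂ v₁ v₂ hu₁ hu hu₂ hv₁ hv hv₂ ↦ ?_⟩
  · have hu' : 1 - u ∈ Icc (0 : ℝ) 1 := Icc.mem_iff_one_sub_mem.mp hu
    simp [copulaReflection, hC.apply_zero_right hu, hC.apply_one_right hu,
      hC.apply_zero_left hu', hC.apply_one_left hu']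
  · have := hC.2 u₁ u₂ (1 - v₂) (1 - v₁) hu₁ hu hu₂ (by linarith) (by linarith) (by linarith)
    simp only [copulaReflection]
    linarith

theorem integral_copulaReflection_right (hC : IsCopula C) (hu : u ∈ Icc (0 : ℝ) 1) :
    ∫ v in (0 : ℝ)..1, copulaReflection C u v = u - ∫ v in (0 : ℝ)..1, C u v := by
  simp only [copulaReflection]
  rw [intervalIntegral.integral_comp_sub_left (fun v ↦ u - C u v), sub_self, sub_zero,
    intervalIntegral.integral_sub intervalIntegrable_const
      (hC.intervalIntegrable_right hu unitInterval.zero_mem unitInterval.one_mem)]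
  simp

theorem spearmanRho_copulaReflection (hC : IsCopula C) :
    spearmanRho (copulaReflection C) = -spearmanRho C := by
  have hinner : ∫ u in (0 : ℝ)..1, ∫ v in (0 : ℝ)..1, copulaReflection C u v =
      ∫ u in (0 : ℝ)..1, (u - ∫ v in (0 : ℝ)..1, C u v) :=
    intervalIntegral.integral_congr fun u hu ↦
      hC.integral_copulaReflection_right (uIcc_of_le (zero_le_one' ℝ) ▸ hu)
  unfold spearmanRho
  rw [hinner, intervalIntegral.integral_sub (continuous_id'.intervalIntegrable _ _)
    (hC.intervalIntegrable_integral_right unitInterval.zero_mem unitInterval.one_mem), integral_id]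
  ring

theorem one_sub_rpow_le_blomqvistBeta (hC : IsCopula C) :
    1 - 2 * (2 * (1 - spearmanRho C) / 3) ^ ((1 : ℝ) / 3) ≤ blomqvistBeta C := by
  have hle := hC.reflection.blomqvistBeta_le_neg_one_add_rpow
  rw [hC.spearmanRho_copulaReflection, blomqvistBeta_copulaReflection, ← sub_eq_add_neg] at hle
  linarith

end IsCopula

/-- Bounds for Blomqvist's beta of a copula in terms of its Spearman's rho. -/
theorem beta_bounds_of_rho (C : ℝ → ℝ → ℝ) (hC : IsCopula C) :
    (if spearmanRho C ≤ -(1/2) then (-1 : ℝ)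
      else 1 - 2 * (2 * (1 - spearmanRho C) / 3) ^ ((1:ℝ)/3)) ≤ blomqvistBeta C ∧
    blomqvistBeta C ≤
      (if (1/2 : ℝ) ≤ spearmanRho C then (1 : ℝ)
      else -1 + 2 * (2 * (1 + spearmanRho C) / 3) ^ ((1:ℝ)/3)) := by
  constructor
  · split_ifs
    · exact hC.neg_one_le_blomqvistBeta
    · exact hC.one_sub_rpow_le_blomqvistBeta
  · split_ifs
    · exact hC.blomqvistBeta_le_one
    · exact hC.blomqvistBeta_le_neg_one_add_rpow
end

section
/- Let t ∈ [−1,1]. Then Kendall's tau of the lower bound copula B̲_t equals τ(B̲_t) = (1+t)²/4 − 1; explicitly, 4·∫₀¹ B̲_t(u, S_t(u)) du − 1 = (1+t)²/4 − 1, where S_t is the support map of B̲_t. -/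
/-- The support map `S_t` of `B̲_t`: `S_t(u) = 1−u` for `u ∈ [0,(1−t)/4] ∪ [(3+t)/4,1]`,
`S_t(u) = (3−t)/4 − u` for `u ∈ ((1−t)/4, 1/2]`, and `S_t(u) = (5+t)/4 − u` for
`u ∈ (1/2, (3+t)/4)`. -/
noncomputable def Smap (t u : ℝ) : ℝ :=
  if u ≤ (1 - t) / 4 then 1 - u
  else if u ≤ 1 / 2 then (3 - t) / 4 - u
  else if u < (3 + t) / 4 then (5 + t) / 4 - u
  else 1 - u

/-!
On the lower-left and upper-right quadrants of the unit square about `(1/2, 1/2)`, `B̲_t(u, v)`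
depends only on `u + v`, and `u + S_t(u)` is constant on the middle pieces of `S_t`; on the outer
pieces the graph of `S_t` runs along the antidiagonal, at distance at least `(1 + t) / 4` from
`u = 1/2`. Hence `u ↦ B̲_t(u, S_t(u))` equals `(1 + t) / 4` on the interval `(1/2, (3 + t) / 4)`,
whose length is also `(1 + t) / 4`, and vanishes elsewhere.
-/

open Set MeasureTheory

section

variable {t u v : ℝ}

theorem Blower_of_le_half (hu : u ≤ 1 / 2) (hv : v ≤ 1 / 2) :
    Blower t u v = max 0 (u + v - (3 - t) / 4) := by
  rw [Blower, max_eq_left (a := 0) (by linarith), max_eq_left (b := 0) (by linarith),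
    max_eq_left (b := 0) (by linarith)]
  congr 1
  ring

theorem Blower_of_half_le (hu : 1 / 2 ≤ u) (hv : 1 / 2 ≤ v) :
    Blower t u v = max (u + v - 1) ((1 + t) / 4) := by
  rw [Blower, max_eq_right (a := 0) (by linarith), max_eq_right (b := 0) (by linarith),
    max_eq_right (b := 0) (by linarith), sub_zero, sub_zero]

theorem Blower_one_sub (t u : ℝ) :
    Blower t u (1 - u) = max 0 ((1 + t) / 4 - |1 / 2 - u|) := by
  have abs_eq : max (1 / 2 - u) 0 + max (1 / 2 - (1 - u)) 0 = |1 / 2 - u| := by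
    rw [← max_zero_add_max_neg_zero_eq_abs_self (1 / 2 - u)]
    ring_nf
  rw [Blower, add_sub_cancel, sub_self, max_self, sub_sub, abs_eq]

theorem Smap_of_le (hu : u ≤ (1 - t) / 4) : Smap t u = 1 - u :=
  if_pos hu

theorem Smap_of_mem_Ioc (hu : u ∈ Ioc ((1 - t) / 4) (1 / 2)) : Smap t u = (3 - t) / 4 - u := by
  rw [Smap, if_neg hu.1.not_ge, if_pos hu.2]

theorem Smap_of_mem_Ioo (hu : u ∈ Ioo (1 / 2) ((3 + t) / 4)) : Smap t u = (5 + t) / 4 - u := by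
  have left_lt : (1 - t) / 4 < u := by linarith [hu.1, hu.2]
  rw [Smap, if_neg left_lt.not_ge, if_neg hu.1.not_ge, if_pos hu.2]

theorem Smap_of_ge (hu : (3 + t) / 4 ≤ u) : Smap t u = 1 - u := by
  rcases le_or_gt u ((1 - t) / 4) with hle | hlt
  · exact Smap_of_le hle
  · have half_lt : 1 / 2 < u := by linarith
    rw [Smap, if_neg hlt.not_ge, if_neg half_lt.not_ge, if_neg hu.not_gt]

theorem Blower_Smap_of_mem_Ioo (hu : u ∈ Ioo (1 / 2) ((3 + t) / 4)) :
    Blower t u (Smap t u) = (1 + t) / 4 := by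
  rw [Smap_of_mem_Ioo hu, Blower_of_half_le hu.1.le (by linarith [hu.2]), max_eq_right]
  linarith

theorem Blower_Smap_of_notMem_Ioo (hu : u ∉ Ioo (1 / 2) ((3 + t) / 4)) :
    Blower t u (Smap t u) = 0 := by
  rcases le_or_gt u ((1 - t) / 4) with hleft | hleft
  · rw [Smap_of_le hleft, Blower_one_sub, max_eq_left]
    linarith [le_abs_self (1 / 2 - u)]
  rcases le_or_gt u (1 / 2) with hmid | hmid
  · rw [Smap_of_mem_Ioc ⟨hleft, hmid⟩, Blower_of_le_half hmid (by linarith), max_eq_left]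
    linarith
  · have hright : (3 + t) / 4 ≤ u := not_lt.mp fun hlt => hu ⟨hmid, hlt⟩
    rw [Smap_of_ge hright, Blower_one_sub, max_eq_left]
    linarith [neg_le_abs (1 / 2 - u)]

theorem Blower_Smap_eq_indicator (t : ℝ) :
    (fun u => Blower t u (Smap t u)) =
      (Ioo (1 / 2) ((3 + t) / 4)).indicator fun _ => (1 + t) / 4 := by
  ext u
  by_cases hu : u ∈ Ioo (1 / 2) ((3 + t) / 4)
  · rw [indicator_of_mem hu, Blower_Smap_of_mem_Ioo hu]
  · rw [indicator_of_notMem hu, Blower_Smap_of_notMem_Ioo hu]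

theorem support_Blower_Smap_subset (t : ℝ) :
    (Function.support fun u => Blower t u (Smap t u)) ⊆ Ioo (1 / 2) ((3 + t) / 4) := by
  rw [Blower_Smap_eq_indicator]
  exact support_indicator_subset

theorem integral_Blower_Smap (ht : -1 ≤ t) :
    ∫ u, Blower t u (Smap t u) = ((1 + t) / 4) ^ 2 := by
  rw [Blower_Smap_eq_indicator, integral_indicator_const _ measurableSet_Ioo,
    Real.volume_real_Ioo_of_le (by linarith), smul_eq_mul]
  ring

end

/-- Kendall's tau of the lower bound copula `B̲_t` equals `(1+t)²/4 − 1`. -/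
theorem tau_Blower (t : ℝ) (ht : t ∈ Set.Icc (-1 : ℝ) 1) :
    4 * (∫ u in (0:ℝ)..1, Blower t u (Smap t u)) - 1 = (1 + t) ^ 2 / 4 - 1 := by
  have Ioo_subset : Ioo (1 / 2) ((3 + t) / 4) ⊆ Ioc 0 1 := fun u hu =>
    ⟨by linarith [hu.1], by linarith [hu.2, ht.2]⟩
  rw [intervalIntegral.integral_eq_integral_of_support_subset
    ((support_Blower_Smap_subset t).trans Ioo_subset), integral_Blower_Smap ht.1]
  ring
end

section
/- Let t ∈ [−1,1]. Then Kendall's tau of the upper bound copula B̄_t equals τ(B̄_t) = 1 − (1−t)²/4; explicitly, 4·∫₀¹ B̄_t(u, T_t(u)) du − 1 = 1 − (1−t)²/4, where T_t is the support map of B̄_t. -/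
/-- The support map `T_t` of `B̄_t`: `T_t(u) = u` for `u ∈ [0,(1+t)/4] ∪ [(3−t)/4,1]`,
`T_t(u) = u + (1−t)/4` for `u ∈ ((1+t)/4, 1/2]`, and `T_t(u) = u − (1−t)/4` for
`u ∈ (1/2, (3−t)/4)`. -/
noncomputable def Tmap (t u : ℝ) : ℝ :=
  if u ≤ (1 + t) / 4 then u
  else if u ≤ 1 / 2 then u + (1 - t) / 4
  else if u < (3 - t) / 4 then u - (1 - t) / 4
  else u

/-!
Along its support `B̄_t` agrees with the upper Fréchet bound `min u v`, and
`min u (T_t u)` is `u` lowered by `(1 - t) / 4` on the interval `(1/2, (3 - t)/4)`, whose length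
is again `(1 - t) / 4`. Hence the integral is `1/2 - ((1 - t) / 4) ^ 2`.
-/

open MeasureTheory Set

theorem intervalIntegral_indicator_Ioo {E : Type*} [NormedAddCommGroup E] [NormedSpace ℝ E]
    {μ : Measure ℝ} [NullSingletonClass μ] {a b c d : ℝ} (hac : a ≤ c) (hcd : c ≤ d) (hdb : d ≤ b)
    (f : ℝ → E) :
    ∫ x in a..b, (Ioo c d).indicator f x ∂μ = ∫ x in c..d, f x ∂μ := by
  have hsub : Ioo c d ⊆ Ioc a b := (Ioo_subset_Ioo hac hdb).trans Ioo_subset_Ioc_self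
  rw [intervalIntegral.integral_of_le (hac.trans (hcd.trans hdb)),
    intervalIntegral.integral_of_le hcd, setIntegral_indicator measurableSet_Ioo,
    inter_eq_right.mpr hsub, integral_Ioc_eq_integral_Ioo]

theorem Bupper_Tmap_eq_min (t u : ℝ) : Bupper t u (Tmap t u) = min u (Tmap t u) := by
  refine min_eq_left ?_
  have hu := le_max_left (u - 1 / 2) 0
  have hu₀ := le_max_right (u - 1 / 2) 0
  have hv := le_max_left (Tmap t u - 1 / 2) 0
  have hv₀ := le_max_right (Tmap t u - 1 / 2) 0
  rw [min_le_iff]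
  unfold Tmap at *
  split_ifs at * with h_low h_half h_high
  · exact .inl (by linarith)
  · exact .inl (by linarith)
  · exact .inr (by linarith)
  · exact .inl (by linarith)

theorem min_Tmap_eq_sub_indicator (t u : ℝ) :
    min u (Tmap t u) = u - (Ioo (1 / 2) ((3 - t) / 4)).indicator (fun _ ↦ (1 - t) / 4) u := by
  simp only [Tmap, indicator_apply, mem_Ioo]
  grind

theorem integral_Bupper_Tmap {t : ℝ} (ht : t ∈ Icc (-1 : ℝ) 1) :
    ∫ u in (0 : ℝ)..1, Bupper t u (Tmap t u) = 1 / 2 - ((1 - t) / 4) ^ 2 := by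
  obtain ⟨ht_lower, ht_upper⟩ := ht
  let deficit : ℝ → ℝ := (Ioo (1 / 2) ((3 - t) / 4)).indicator fun _ ↦ (1 - t) / 4
  have deficit_integrable : IntervalIntegrable deficit volume 0 1 :=
    ((integrableOn_const measure_Ioo_lt_top.ne).integrable_indicator
      measurableSet_Ioo).intervalIntegrable
  have integral_deficit : ∫ u in (0 : ℝ)..1, deficit u = ((1 - t) / 4) ^ 2 := by
    rw [intervalIntegral_indicator_Ioo (by norm_num) (by linarith) (by linarith),
      intervalIntegral.integral_const, smul_eq_mul]
    ring
  calc ∫ u in (0 : ℝ)..1, Bupper t u (Tmap t u)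
      = ∫ u in (0 : ℝ)..1, (u - deficit u) := by
        simp only [Bupper_Tmap_eq_min, min_Tmap_eq_sub_indicator, deficit]
    _ = (∫ u in (0 : ℝ)..1, u) - ∫ u in (0 : ℝ)..1, deficit u :=
        intervalIntegral.integral_sub intervalIntegral.intervalIntegrable_id deficit_integrable
    _ = 1 / 2 - ((1 - t) / 4) ^ 2 := by rw [integral_id, integral_deficit]; norm_num

/-- Kendall's tau of the upper bound copula `B̄_t` equals `1 − (1−t)²/4`. -/
theorem tau_Bupper (t : ℝ) (ht : t ∈ Set.Icc (-1 : ℝ) 1) :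
    4 * (∫ u in (0:ℝ)..1, Bupper t u (Tmap t u)) - 1 = 1 - (1 - t) ^ 2 / 4 := by
  rw [integral_Bupper_Tmap ht]
  ring
end

section
/- Let t ∈ [−1,1]. Then Spearman's footrule of the lower bound copula B̲_t equals φ(B̲_t) = (3/16)(1+t)² − 1/2; explicitly, 6·∫₀¹ B̲_t(u,u) du − 2 = (3/16)(1+t)² − 1/2. -/
/-!
Put `d = (1 + t) / 4`. On the diagonal `B̲_t` is piecewise linear with slopes `0, 2, 0, 2` and kinks
at `(1 - d) / 2`, `1 / 2` and `(1 + d) / 2`, so it is the alternating sum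
`(2u - (1 - d))⁺ - (2u - 1)⁺ + (2u - (1 + d))⁺`. Since `∫₀¹ (2u - s)⁺ du = (2 - s)² / 4` whenever
the kink `s / 2` lies in `[0, 1]`, the integral is `((1 + d)² - 1 + (1 - d)²) / 4`.
-/

theorem hasDerivAt_max_zero_sq (x : ℝ) :
    HasDerivAt (fun y : ℝ => max y 0 ^ 2) (2 * max x 0) x := by
  rcases lt_trichotomy x 0 with hneg | rfl | hpos
  · have hzero : (fun y : ℝ => max y 0 ^ 2) =ᶠ[nhds x] fun _ => 0 := by
      filter_upwards [eventually_lt_nhds hneg] with y hy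
      simp [hy.le]
    simpa [hneg.le] using (hasDerivAt_const x (0 : ℝ)).congr_of_eventuallyEq hzero
  · have hquad : (fun y : ℝ => max y 0 ^ 2) =O[nhds 0] fun y => ‖y - 0‖ ^ 2 := by
      refine Asymptotics.isBigO_of_le _ fun y => ?_
      rcases le_total y 0 with hy | hy <;> simp [hy, sq_nonneg]
    simpa using (hquad.hasFDerivAt (𝕜 := ℝ) one_lt_two).hasDerivAt
  · have hsq : (fun y : ℝ => max y 0 ^ 2) =ᶠ[nhds x] fun y => y ^ 2 := by
      filter_upwards [eventually_gt_nhds hpos] with y hy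
      simp [hy.le]
    simpa [hpos.le] using (hasDerivAt_pow 2 x).congr_of_eventuallyEq hsq

theorem integral_max_zero (a b : ℝ) :
    ∫ x in a..b, max x 0 = (max b 0 ^ 2 - max a 0 ^ 2) / 2 := by
  have hderiv (x : ℝ) : HasDerivAt (fun y : ℝ => max y 0 ^ 2 / 2) (max x 0) x := by
    simpa using (hasDerivAt_max_zero_sq x).div_const 2
  have hint : IntervalIntegrable (fun x : ℝ => max x 0) MeasureTheory.volume a b :=
    Continuous.intervalIntegrable (by fun_prop) a b
  rw [intervalIntegral.integral_eq_sub_of_hasDerivAt (fun x _ => hderiv x) hint, sub_div]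

theorem integral_max_mul_sub_zero {a b c s : ℝ} (hc : c ≠ 0) (ha : c * a ≤ s) (hb : s ≤ c * b) :
    ∫ x in a..b, max (c * x - s) 0 = (c * b - s) ^ 2 / (2 * c) := by
  rw [intervalIntegral.integral_comp_mul_sub (fun x => max x 0) hc, integral_max_zero,
    max_eq_left (sub_nonneg.mpr hb), max_eq_right (sub_nonpos.mpr ha), smul_eq_mul]
  field_simp
  ring

theorem Blower_diag {t : ℝ} (ht : -1 ≤ t) (u : ℝ) :
    Blower t u u = max (2 * u - (1 - (1 + t) / 4)) 0 - max (2 * u - 1) 0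
      + max (2 * u - (1 + (1 + t) / 4)) 0 := by
  unfold Blower
  rcases le_total u (1 / 2) with hu | hu
  · rw [max_eq_left (a := 0) (by linarith), max_eq_left (a := 1 / 2 - u) (by linarith),
      max_eq_right (a := 2 * u - 1) (by linarith),
      max_eq_right (a := 2 * u - (1 + (1 + t) / 4)) (by linarith), max_comm]
    ring_nf
  · rw [max_eq_right (a := 0) (by linarith), max_eq_right (a := 1 / 2 - u) (by linarith),
      max_eq_left (a := 2 * u - (1 - (1 + t) / 4)) (by linarith),
      max_eq_left (a := 2 * u - 1) (by linarith), ← max_add_add_left]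
    ring_nf

/-- At `t = 3` the outer kinks `(3 - t) / 8` and `(5 + t) / 8` of the diagonal reach the endpoints
of `[0, 1]`. -/
theorem integral_Blower_diag {t : ℝ} (ht : t ∈ Set.Icc (-1 : ℝ) 3) :
    ∫ u in (0 : ℝ)..1, Blower t u u = 1 / 4 + (1 + t) ^ 2 / 32 := by
  obtain ⟨hlower, hupper⟩ := ht
  have hint (s : ℝ) :
      IntervalIntegrable (fun u : ℝ => max (2 * u - s) 0) MeasureTheory.volume 0 1 :=
    Continuous.intervalIntegrable (by fun_prop) 0 1
  simp_rw [Blower_diag hlower]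
  rw [intervalIntegral.integral_add ((hint _).sub (hint _)) (hint _),
    intervalIntegral.integral_sub (hint _) (hint _),
    integral_max_mul_sub_zero two_ne_zero (by linarith) (by linarith),
    integral_max_mul_sub_zero two_ne_zero (by linarith) (by linarith),
    integral_max_mul_sub_zero two_ne_zero (by linarith) (by linarith)]
  ring

theorem footrule_Blower_general {t : ℝ} (ht : t ∈ Set.Icc (-1 : ℝ) 3) :
    6 * (∫ u in (0 : ℝ)..1, Blower t u u) - 2 = 3 / 16 * (1 + t) ^ 2 - 1 / 2 := by
  rw [integral_Blower_diag ht]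
  ring

/-- Spearman's footrule of the lower bound copula `B̲_t` equals `(3/16)(1+t)² − 1/2`. -/
theorem footrule_Blower (t : ℝ) (ht : t ∈ Set.Icc (-1 : ℝ) 1) :
    6 * (∫ u in (0:ℝ)..1, Blower t u u) - 2 = 3 / 16 * (1 + t) ^ 2 - 1 / 2 :=
  footrule_Blower_general ⟨ht.1, ht.2.trans (by norm_num)⟩
end

section
/- Let t ∈ [−1,1]. Then Spearman's footrule of the upper bound copula B̄_t equals φ(B̄_t) = 1 − (3/8)(1−t)²; explicitly, 6·∫₀¹ B̄_t(u,u) du − 2 = 1 − (3/8)(1−t)². -/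
/-!
On the diagonal, `B̄_t` falls short of the comonotonicity copula `min u v` by the tent of height
and half-width `r = (1 - t) / 4` centred at `1 / 2`. For `t ∈ [-1, 1]` that tent is supported in
`[0, 1]`, so its area is `r ^ 2`, and the footrule drops from `1` to `1 - 6 * r ^ 2`.
-/

section Tent

variable {a b c r : ℝ}

theorem integral_max_sub_const_zero (hac : a ≤ c) (hcb : c ≤ b) :
    ∫ x in a..b, max (x - c) 0 = (b - c) ^ 2 / 2 := by
  have intervalIntegrable (p q : ℝ) :
      IntervalIntegrable (fun x ↦ max (x - c) 0) MeasureTheory.volume p q :=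
    Continuous.intervalIntegrable (by fun_prop) p q
  have left_eq_zero : ∫ x in a..c, max (x - c) 0 = 0 := by
    refine intervalIntegral.integral_zero_ae (.of_forall fun x hx ↦ ?_)
    rw [Set.uIoc_of_le hac] at hx
    exact max_eq_right (sub_nonpos.2 hx.2)
  have right_congr : ∫ x in c..b, max (x - c) 0 = ∫ x in c..b, (x - c) := by
    refine intervalIntegral.integral_congr fun x hx ↦ ?_
    rw [Set.uIcc_of_le hcb] at hx
    exact max_eq_left (sub_nonneg.2 hx.1)
  calc ∫ x in a..b, max (x - c) 0
      = (∫ x in a..c, max (x - c) 0) + ∫ x in c..b, max (x - c) 0 :=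
        (intervalIntegral.integral_add_adjacent_intervals (intervalIntegrable a c)
          (intervalIntegrable c b)).symm
    _ = ∫ x in c..b, (x - c) := by rw [left_eq_zero, right_congr, zero_add]
    _ = ∫ x in (c - c)..(b - c), x := intervalIntegral.integral_comp_sub_right (fun x ↦ x) c
    _ = (b - c) ^ 2 / 2 := by rw [integral_id, sub_self]; ring

theorem integral_max_const_sub_zero (hac : a ≤ c) (hcb : c ≤ b) :
    ∫ x in a..b, max (c - x) 0 = (c - a) ^ 2 / 2 :=
  calc ∫ x in a..b, max (c - x) 0
      = ∫ x in a..b, max (-x - -c) 0 := by simp only [neg_sub_neg]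
    _ = ∫ x in -b..-a, max (x - -c) 0 :=
        intervalIntegral.integral_comp_neg fun x ↦ max (x - -c) 0
    _ = (-a - -c) ^ 2 / 2 :=
        integral_max_sub_const_zero (neg_le_neg hcb) (neg_le_neg hac)
    _ = (c - a) ^ 2 / 2 := by rw [neg_sub_neg]

theorem integral_max_sub_abs_sub_zero (hr : 0 ≤ r) (ha : a ≤ c - r) (hb : c + r ≤ b) :
    ∫ x in a..b, max (r - |x - c|) 0 = r ^ 2 := by
  have intervalIntegrable (p q : ℝ) :
      IntervalIntegrable (fun x ↦ max (r - |x - c|) 0) MeasureTheory.volume p q :=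
    Continuous.intervalIntegrable (by fun_prop) p q
  have left_half : ∫ x in a..c, max (r - |x - c|) 0 = ∫ x in a..c, max (x - (c - r)) 0 := by
    refine intervalIntegral.integral_congr fun x hx ↦ ?_
    rw [Set.uIcc_of_le (by linarith)] at hx
    simp only [abs_of_nonpos (sub_nonpos.2 hx.2)]
    ring_nf
  have right_half : ∫ x in c..b, max (r - |x - c|) 0 = ∫ x in c..b, max (c + r - x) 0 := by
    refine intervalIntegral.integral_congr fun x hx ↦ ?_
    rw [Set.uIcc_of_le (by linarith)] at hx
    simp only [abs_of_nonneg (sub_nonneg.2 hx.1)]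
    ring_nf
  rw [← intervalIntegral.integral_add_adjacent_intervals (intervalIntegrable a c)
      (intervalIntegrable c b), left_half, right_half,
    integral_max_sub_const_zero ha (by linarith),
    integral_max_const_sub_zero (by linarith) hb]
  ring

end Tent

theorem Bupper_self (t u : ℝ) :
    Bupper t u u = u - max ((1 - t) / 4 - |u - 1 / 2|) 0 := by
  have two_mul_max : 2 * max (u - 1 / 2) 0 = u - 1 / 2 + |u - 1 / 2| := by
    simpa [abs_sub_comm] using two_nsmul_sup_eq_add_add_abs_sub (u - 1 / 2) 0
  have third_arg_eq : (1 + t) / 4 + max (u - 1 / 2) 0 + max (u - 1 / 2) 0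
      = u - ((1 - t) / 4 - |u - 1 / 2|) := by
    linear_combination two_mul_max
  rw [Bupper, min_self, third_arg_eq, max_comm, ← min_sub_sub_left, sub_zero]

/-- Spearman's footrule of the upper bound copula `B̄_t` equals `1 − (3/8)(1−t)²`. -/
theorem footrule_Bupper (t : ℝ) (ht : t ∈ Set.Icc (-1 : ℝ) 1) :
    6 * (∫ u in (0:ℝ)..1, Bupper t u u) - 2 = 1 - 3 / 8 * (1 - t) ^ 2 := by
  obtain ⟨neg_one_le, le_one⟩ := ht
  have tent_area : ∫ u in (0 : ℝ)..1, max ((1 - t) / 4 - |u - 1 / 2|) 0 = ((1 - t) / 4) ^ 2 :=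
    integral_max_sub_abs_sub_zero (by linarith) (by linarith) (by linarith)
  simp only [Bupper_self]
  rw [intervalIntegral.integral_sub (Continuous.intervalIntegrable (by fun_prop) _ _)
      (Continuous.intervalIntegrable (by fun_prop) _ _), tent_area, integral_id]
  ring
end

section
/- Let t ∈ [−1,1] and set c = (1+t)/4. For all u, v ∈ [0,1], max{0, u+v−1, c − max(1/2−u,0) − max(1/2−v,0)} = max{ max(u+v−1, 0), min{c, u−1/2+c, v−1/2+c, u+v−1+c} }. In other words, the lower bound B̲_t of the set of copulas with Blomqvist's beta equal to t coincides with the copula C̲^{a,b,c} of the asymmetry construction at a = b = 1/2, c = (1+t)/4. -/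
/-!
Subtracting the positive part of `a - u` from `d` gives `min d (u - a + d)`. Doing so once for `u`
and once for `v`, and distributing the second translation over the first minimum, yields the
four-term minimum.
-/

section LinearOrderedAddCommGroup

variable {α : Type*} [AddCommGroup α] [LinearOrder α] [IsOrderedAddMonoid α]

theorem sub_max_sub_zero_eq_min (d a u : α) : d - max (a - u) 0 = min d (u - a + d) := by
  have reflect : d - (a - u) = u - a + d := by abel
  rw [← min_sub_sub_left, sub_zero, reflect, min_comm]

theorem sub_max_sub_zero_sub_max_sub_zero_eq_min (d a b u v : α) :
    d - max (a - u) 0 - max (b - v) 0 =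
      min (min d (u - a + d)) (min (v - b + d) (u + v - a - b + d)) := by
  have translate_twice : v - b + (u - a + d) = u + v - a - b + d := by abel
  calc d - max (a - u) 0 - max (b - v) 0
      = min d (u - a + d) - max (b - v) 0 := by rw [sub_max_sub_zero_eq_min d]
    _ = min (min d (u - a + d)) (v - b + min d (u - a + d)) := sub_max_sub_zero_eq_min _ b v
    _ = min (min d (u - a + d)) (min (v - b + d) (u + v - a - b + d)) := by
      rw [← min_add_add_left, translate_twice]

end LinearOrderedAddCommGroup

theorem Blower_eq_Clow_general {α : Type*} [AddCommGroupWithOne α] [LinearOrder α]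
    [IsOrderedAddMonoid α] (a b d u v : α) :
    max (max 0 (u + v - 1)) (d - max (a - u) 0 - max (b - v) 0)
      = max (max (u + v - 1) 0)
          (min (min d (u - a + d)) (min (v - b + d) (u + v - a - b + d))) := by
  rw [max_comm 0, sub_max_sub_zero_sub_max_sub_zero_eq_min]

/-- The lower bound `B̲_t` of the set of copulas with Blomqvist's beta equal to `t`
coincides with the copula `C̲^{a,b,c}` of the asymmetry construction at
`a = b = 1/2`, `c = (1+t)/4` (where `d₁ = c`). -/
theorem Blower_eq_Clow (t : ℝ) (ht : t ∈ Set.Icc (-1 : ℝ) 1) (c : ℝ)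
    (hc : c = (1 + t) / 4) :
    ∀ u ∈ Set.Icc (0:ℝ) 1, ∀ v ∈ Set.Icc (0:ℝ) 1,
      max (max 0 (u + v - 1)) (c - max (1 / 2 - u) 0 - max (1 / 2 - v) 0)
        = max (max (u + v - 1) 0)
            (min (min c (u - 1 / 2 + c)) (min (v - 1 / 2 + c) (u + v - 1 + c))) := by
  intro u _ v _
  rw [show u + v - 1 + c = u + v - 1 / 2 - 1 / 2 + c by ring]
  exact Blower_eq_Clow_general (1 / 2) (1 / 2) c u v
end

section
/- Let t ∈ [−1,1] and set c = (1−t)/4 and d₂ = 1/2 − c = (1+t)/4. For all u, v ∈ [0,1], min{u, v, (1+t)/4 + max(u−1/2,0) + max(v−1/2,0)} = min{ min(u,v), max{d₂, u−1/2+d₂, v−1/2+d₂, u+v−1+d₂} }. In other words, the upper bound B̄_t of the set of copulas with Blomqvist's beta equal to t coincides with the copula C̄^{b,a,c} of the asymmetry construction at a = b = 1/2, c = (1−t)/4. -/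
theorem add_max_zero_add_max_zero {M : Type*} [AddCommMonoid M] [LinearOrder M] [AddLeftMono M]
    (d x y : M) :
    d + max x 0 + max y 0 = max (max d (x + d)) (max (y + d) (x + y + d)) := by
  calc d + max x 0 + max y 0
      = max (x + d) d + max y 0 := by rw [add_comm d, max_add, zero_add]
    _ = max (max (x + d + y) (d + y)) (max (x + d) d) := by rw [add_max, max_add, add_zero]
    _ = max (max d (x + d)) (max (y + d) (x + y + d)) := by
      rw [add_right_comm x d y, add_comm d y, max_comm, max_comm (x + d), max_comm (x + y + d)]

/-- For `d = min a b - c` the right-hand side is the paper's `C̄^{b,a,c}`. -/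
theorem Bupper_eq_Cup_general {G : Type*} [AddCommGroup G] [LinearOrder G] [AddLeftMono G]
    (a b d u v : G) :
    min (min u v) (d + max (u - b) 0 + max (v - a) 0)
      = min (min u v)
          (max (max d (u - b + d)) (max (v - a + d) (u + v - a - b + d))) := by
  have corner : u - b + (v - a) + d = u + v - a - b + d := by abel
  rw [add_max_zero_add_max_zero, corner]

/-- The upper bound `B̄_t` of the set of copulas with Blomqvist's beta equal to `t`
coincides with the copula `C̄^{b,a,c}` of the asymmetry construction at
`a = b = 1/2`, `c = (1−t)/4` (where `d₂ = 1/2 − c = (1+t)/4`). -/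
theorem Bupper_eq_Cup (t : ℝ) (ht : t ∈ Set.Icc (-1 : ℝ) 1) (c d₂ : ℝ)
    (hc : c = (1 - t) / 4) (hd : d₂ = 1 / 2 - c) :
    ∀ u ∈ Set.Icc (0:ℝ) 1, ∀ v ∈ Set.Icc (0:ℝ) 1,
      min (min u v) ((1 + t) / 4 + max (u - 1 / 2) 0 + max (v - 1 / 2) 0)
        = min (min u v)
            (max (max d₂ (u - 1 / 2 + d₂)) (max (v - 1 / 2 + d₂) (u + v - 1 + d₂))) := by
  have d₂_eq : d₂ = (1 + t) / 4 := by rw [hd, hc]; ring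
  intro u _ v _
  rw [d₂_eq, Bupper_eq_Cup_general, sub_sub (u + v), add_halves]
end

section
/- Let a, b ∈ [0,1] and 0 ≤ c ≤ min{a, b, 1−a, 1−b, |b−a|}, and set d₁ = max(a+b−1,0) + c. Then the concordance of the lower Fréchet–Hoeffding copula W with C̲^{a,b,c} satisfies Q(W, C̲^{a,b,c}) = 4·∫₀¹ C̲^{a,b,c}(u, 1−u) du − 1 = 4d₁(1−a−b+d₁) − 1; equivalently, ∫₀¹ C̲^{a,b,c}(u, 1−u) du = d₁(1−a−b+d₁). -/
/-- The lower bound copula `C̲^{a,b,c}` of the asymmetry construction, where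
`d₁ = max(a+b−1,0) + c`. -/
noncomputable def CLow (a b c u v : ℝ) : ℝ :=
  max (max (u + v - 1) 0)
    (min (min (max (a + b - 1) 0 + c) (u - a + (max (a + b - 1) 0 + c)))
      (min (v - b + (max (a + b - 1) 0 + c)) (u + v - a - b + (max (a + b - 1) 0 + c))))

/-!
On the anti-diagonal, `CLow a b c u (1 - u)` is the length of `[a - d₁, 1 - b] ∩ [u - d₁, u]`, that
is, the convolution at `u` of the indicators of `[a - d₁, 1 - b]` and `[0, d₁]`. Its integral over
`ℝ` is therefore the product of the lengths `1 - a - b + d₁` and `d₁`. It vanishes outside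
`(a - d₁, 1 - b + d₁)`, an interval contained in `(0, 1)` because `d₁ ≤ min a b`.
-/

open MeasureTheory Set

theorem integral_measureReal_inter_preimage_sub {G : Type*} [AddGroup G] [MeasurableSpace G]
    [MeasurableAdd₂ G] [MeasurableNeg G] {μ ν : Measure G} [SFinite μ] [SFinite ν]
    [μ.IsAddRightInvariant] {s t : Set G} (hs : MeasurableSet s) (ht : MeasurableSet t)
    (hνs : ν s ≠ ⊤) (hμt : μ t ≠ ⊤) :
    ∫ x, ν.real (s ∩ (x - ·) ⁻¹' t) ∂μ = ν.real s * μ.real t := by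
  have convolution_indicator (x : G) :
      convolution (s.indicator 1) (t.indicator 1) (ContinuousLinearMap.mul ℝ ℝ) ν x
        = ν.real (s ∩ (x - ·) ⁻¹' t) := by
    rw [← integral_indicator_one (hs.inter (ht.preimage (measurable_const_sub x)))]
    simp only [convolution_def, ContinuousLinearMap.mul_apply', inter_indicator_one,
      Pi.mul_apply]
    rfl
  have integrable_s : Integrable (s.indicator (1 : G → ℝ)) ν :=
    (integrable_indicator_iff hs).2 (integrableOn_const hνs)
  have integrable_t : Integrable (t.indicator (1 : G → ℝ)) μ :=
    (integrable_indicator_iff ht).2 (integrableOn_const hμt)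
  simp_rw [← convolution_indicator]
  rw [integral_convolution _ integrable_s integrable_t, integral_indicator_one hs,
    integral_indicator_one ht, ContinuousLinearMap.mul_apply']

theorem min_sub_max {α : Type*} [AddCommGroup α] [LinearOrder α] [IsOrderedAddMonoid α]
    (w x y z : α) :
    min w x - max y z = min (min (w - y) (w - z)) (min (x - y) (x - z)) := by
  rw [← min_sub_sub_right, ← min_sub_sub_left, ← min_sub_sub_left]

section Antidiagonal

variable {a b c d₁ : ℝ}

theorem CLow_antidiagonal (hd : d₁ = max (a + b - 1) 0 + c) (u : ℝ) :
    CLow a b c u (1 - u) =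
      max (min (min d₁ (u - (a - d₁))) (min (1 - b + d₁ - u) (1 - a - b + d₁))) 0 := by
  rw [CLow, ← hd, add_sub_cancel, sub_self, max_self, max_comm]
  ring_nf

theorem CLow_antidiagonal_eq_volume_real (hd : d₁ = max (a + b - 1) 0 + c) (u : ℝ) :
    CLow a b c u (1 - u) = volume.real (Icc (a - d₁) (1 - b) ∩ (u - ·) ⁻¹' Icc 0 d₁) := by
  rw [CLow_antidiagonal hd, preimage_const_sub_Icc, Icc_inter_Icc, Real.volume_real_Icc, sub_zero,
    min_comm (1 - b), max_comm (a - d₁), min_sub_max]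
  ring_nf

theorem integral_CLow_antidiagonal (hc : 0 ≤ c) (hd : d₁ = max (a + b - 1) 0 + c) :
    ∫ u, CLow a b c u (1 - u) = d₁ * (1 - a - b + d₁) := by
  have d₁_nonneg : 0 ≤ d₁ := by rw [hd]; positivity
  have le_d₁ : a + b - 1 ≤ d₁ := by linarith [le_max_left (a + b - 1) 0]
  simp_rw [CLow_antidiagonal_eq_volume_real hd]
  rw [integral_measureReal_inter_preimage_sub measurableSet_Icc measurableSet_Icc (by simp)
    (by simp), Real.volume_real_Icc_of_le (by linarith), Real.volume_real_Icc_of_le d₁_nonneg]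
  ring

theorem support_CLow_antidiagonal_subset (hd : d₁ = max (a + b - 1) 0 + c) :
    Function.support (fun u ↦ CLow a b c u (1 - u)) ⊆ Ioo (a - d₁) (1 - b + d₁) := by
  intro u hu
  simp only [Function.mem_support, CLow_antidiagonal hd, ne_eq, max_eq_right_iff, not_le,
    lt_min_iff, sub_pos] at hu
  exact ⟨hu.1.2, hu.2.1⟩

end Antidiagonal

theorem min_sub_max_add_sub_one (a b : ℝ) :
    min a b - max (a + b - 1) 0 = min (min a b) (min (1 - a) (1 - b)) := by
  rw [max_comm, min_sub_max, min_min_min_comm, min_comm (a - (a + b - 1))]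
  ring_nf

theorem Q_W_CLow_general (a b c : ℝ) (hc0 : 0 ≤ c)
    (hc : c ≤ min (min a b) (min (1 - a) (1 - b)))
    (d₁ : ℝ) (hd : d₁ = max (a + b - 1) 0 + c) :
    4 * (∫ u in (0:ℝ)..1, CLow a b c u (1 - u)) - 1
      = 4 * d₁ * (1 - a - b + d₁) - 1 := by
  have d₁_le : d₁ ≤ min a b := by
    rw [← min_sub_max_add_sub_one] at hc
    linarith
  have support_subset : Function.support (fun u ↦ CLow a b c u (1 - u)) ⊆ Ioc 0 1 :=
    (support_CLow_antidiagonal_subset hd).trans <| Ioo_subset_Ioc_self.trans <|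
      Ioc_subset_Ioc (by linarith [min_le_left a b]) (by linarith [min_le_right a b])
  rw [intervalIntegral.integral_eq_integral_of_support_subset support_subset,
    integral_CLow_antidiagonal hc0 hd, mul_assoc]

/-- `Q(W, C̲^{a,b,c}) = 4d₁(1−a−b+d₁) − 1`, where `W` is the lower Fréchet–Hoeffding
copula whose mass lies on the anti-diagonal. -/
theorem Q_W_CLow (a b c : ℝ) (ha : a ∈ Set.Icc (0:ℝ) 1) (hb : b ∈ Set.Icc (0:ℝ) 1)
    (hc0 : 0 ≤ c)
    (hc : c ≤ min (min a b) (min (min (1 - a) (1 - b)) |b - a|))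
    (d₁ : ℝ) (hd : d₁ = max (a + b - 1) 0 + c) :
    4 * (∫ u in (0:ℝ)..1, CLow a b c u (1 - u)) - 1
      = 4 * d₁ * (1 - a - b + d₁) - 1 :=
  Q_W_CLow_general a b c hc0 (hc.trans (min_le_min_left _ (min_le_left _ _))) d₁ hd
end

section
/- Let a, b ∈ [0,1] and 0 ≤ c ≤ min{a, b, 1−a, 1−b, |b−a|}, and set d₂ = min(a,b) − c. Then Q(C̄^{b,a,c}, C̄^{b,a,c}) = 4·∫₀¹ C̄^{b,a,c}(u, T(u)) du − 1 = 1 − 4(a−d₂)(b−d₂), where T is the support map of C̄^{b,a,c} given by T(u) = u for u ∈ [0, d₂] ∪ [a+b−d₂, 1], T(u) = u + a − d₂ for u ∈ (d₂, b], and T(u) = u − b + d₂ for u ∈ (b, a+b−d₂). -/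
/-- The upper bound copula `C̄^{b,a,c}` of the asymmetry construction, where
`d₂ = min(a,b) − c`. -/
noncomputable def CUp (a b c u v : ℝ) : ℝ :=
  min (min u v)
    (max (max (min a b - c) (u - b + (min a b - c)))
      (max (v - a + (min a b - c)) (u + v - a - b + (min a b - c))))

/-- The support map `T` of `C̄^{b,a,c}`: `T(u) = u` on `[0, d₂] ∪ [a+b−d₂, 1]`,
`T(u) = u + a − d₂` on `(d₂, b]`, and `T(u) = u − b + d₂` on `(b, a+b−d₂)`. -/
noncomputable def TUp (a b d₂ u : ℝ) : ℝ :=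
  if u ≤ d₂ then u
  else if u ≤ b then u + a - d₂
  else if u < a + b - d₂ then u - b + d₂
  else u

/-!
On the graph of `T` the copula coincides with the upper Fréchet–Hoeffding bound: the inner maximum
dominates `min u (T u)`, so `C̄(u, T u) = min u (T u)`. Since `T` lies below the diagonal only on
`(b, a + b - d₂)`, an interval of length `a - d₂`, and there by the constant `b - d₂`, the integral
of `C̄(u, T u)` falls short of `∫ u du` by `(a - d₂)(b - d₂)`.
-/

open MeasureTheory Set

theorem intervalIntegral_indicator_Ioo_const {E : Type*} [NormedAddCommGroup E] [NormedSpace ℝ E]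
    [CompleteSpace E] {x y p q : ℝ} (hxp : x ≤ p) (hpq : p ≤ q) (hqy : q ≤ y) (k : E) :
    ∫ u in x..y, (Ioo p q).indicator (fun _ => k) u = (q - p) • k := by
  have hsub : Ioo p q ⊆ Ioc x y := fun u hu => ⟨hxp.trans_lt hu.1, hu.2.le.trans hqy⟩
  rw [intervalIntegral.integral_of_le (hxp.trans (hpq.trans hqy)),
    setIntegral_indicator measurableSet_Ioo, inter_eq_right.2 hsub, setIntegral_const,
    Real.volume_real_Ioo_of_le hpq]

theorem min_TUp_le (a b d u : ℝ) :
    min u (TUp a b d u) ≤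
      max (max d (u - b + d)) (max (TUp a b d u - a + d) (u + TUp a b d u - a - b + d)) := by
  unfold TUp
  split_ifs with hud hub huab
  · exact (min_le_left _ _).trans (le_max_of_le_left (le_max_of_le_left hud))
  · exact (min_le_left _ _).trans (le_max_of_le_right (le_max_of_le_left (by linarith)))
  · exact (min_le_right _ _).trans (le_max_of_le_left (le_max_right _ _))
  · exact (min_le_left _ _).trans (le_max_of_le_right (le_max_of_le_right (by linarith)))

theorem min_TUp_eq_sub_indicator {a b d : ℝ} (hda : d ≤ a) (hdb : d ≤ b) (u : ℝ) :
    min u (TUp a b d u) = u - (Ioo b (a + b - d)).indicator (fun _ => b - d) u := by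
  unfold TUp
  split_ifs with hud hub huab
  · rw [indicator_of_notMem (fun hu => hu.1.not_ge (hud.trans hdb)), min_self, sub_zero]
  · rw [indicator_of_notMem (fun hu => hu.1.not_ge hub), min_eq_left (by linarith), sub_zero]
  · rw [indicator_of_mem (mem_Ioo.2 ⟨not_le.1 hub, huab⟩), min_eq_right (by linarith), sub_add]
  · rw [indicator_of_notMem (fun hu => huab hu.2), min_self, sub_zero]

theorem integral_min_TUp {a b d x y : ℝ} (hda : d ≤ a) (hdb : d ≤ b) (hxb : x ≤ b)
    (hy : a + b - d ≤ y) :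
    ∫ u in x..y, min u (TUp a b d u) = (y ^ 2 - x ^ 2) / 2 - (a - d) * (b - d) := by
  have hint : Integrable ((Ioo b (a + b - d)).indicator fun _ => b - d) :=
    (integrable_indicator_iff measurableSet_Ioo).2 (integrableOn_const (by simp))
  simp_rw [min_TUp_eq_sub_indicator hda hdb]
  rw [intervalIntegral.integral_sub (by simp) hint.intervalIntegrable, integral_id,
    intervalIntegral_indicator_Ioo_const hxb (by linarith) hy, smul_eq_mul]
  ring

theorem CUp_TUp_eq_min (a b c u : ℝ) :
    CUp a b c u (TUp a b (min a b - c) u) = min u (TUp a b (min a b - c) u) :=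
  min_eq_left (min_TUp_le a b (min a b - c) u)

theorem Q_CUp_CUp_general {a b c : ℝ} (hb : 0 ≤ b) (hc0 : 0 ≤ c) (hc : c ≤ min (1 - a) (1 - b))
    {d₂ : ℝ} (hd : d₂ = min a b - c) :
    4 * (∫ u in (0:ℝ)..1, CUp a b c u (TUp a b d₂ u)) - 1
      = 1 - 4 * (a - d₂) * (b - d₂) := by
  have hda : d₂ ≤ a := by linarith [min_le_left a b]
  have hdb : d₂ ≤ b := by linarith [min_le_right a b]
  have hmax : max a b ≤ 1 - c :=
    max_le (le_sub_comm.1 (le_min_iff.1 hc).1) (le_sub_comm.1 (le_min_iff.1 hc).2)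
  have hd1 : a + b - d₂ ≤ 1 := by linarith [min_add_max a b]
  have hmin (u : ℝ) : CUp a b c u (TUp a b d₂ u) = min u (TUp a b d₂ u) :=
    hd ▸ CUp_TUp_eq_min a b c u
  simp_rw [hmin]
  rw [integral_min_TUp hda hdb hb hd1]
  ring

/-- `Q(C̄^{b,a,c}, C̄^{b,a,c}) = 1 − 4(a−d₂)(b−d₂)`. -/
theorem Q_CUp_CUp (a b c : ℝ) (ha : a ∈ Set.Icc (0:ℝ) 1) (hb : b ∈ Set.Icc (0:ℝ) 1)
    (hc0 : 0 ≤ c)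
    (hc : c ≤ min (min a b) (min (min (1 - a) (1 - b)) |b - a|))
    (d₂ : ℝ) (hd : d₂ = min a b - c) :
    4 * (∫ u in (0:ℝ)..1, CUp a b c u (TUp a b d₂ u)) - 1
      = 1 - 4 * (a - d₂) * (b - d₂) :=
  Q_CUp_CUp_general hb.1 hc0 (hc.trans ((min_le_right _ _).trans (min_le_left _ _))) hd
end

section
/- Let a, b ∈ [0,1] and 0 ≤ c ≤ min{a, b, 1−a, 1−b, |b−a|}, and set d₂ = min(a,b) − c. Then the concordance of the upper Fréchet–Hoeffding copula M with C̄^{b,a,c} satisfies Q(M, C̄^{b,a,c}) = 4·∫₀¹ C̄^{b,a,c}(u, u) du − 1 = 1 − 4(a−d₂)(b−d₂); equivalently, ∫₀¹ C̄^{b,a,c}(u,u) du = 1/2 − (a−d₂)(b−d₂). -/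
/-!
Write `d = min a b - c`. Since `max {0, x, y, x + y} = x⁺ + y⁺`, the copula is
`min {u, v, d + (u - b)⁺ + (v - a)⁺}`. As `d ≤ a` and `d ≤ b`, on the diagonal it falls short of
`u` by a trapezoid with corners `d`, `a`, `b`, `a + b - d`, which is the signed sum of ramps
`(u - d)⁺ - (u - a)⁺ - (u - b)⁺ + (u - (a + b - d))⁺`. The Fréchet bounds `0 ≤ d` and
`a + b - 1 ≤ d` place all four corners in `[0, 1]`, where a ramp starting at `p` has integral
`(1 - p) ^ 2 / 2`.
-/

theorem posPart_add_posPart_eq_sup {α : Type*} [Lattice α] [AddCommGroup α] [AddLeftMono α]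
    (x y : α) : x⁺ + y⁺ = (0 ⊔ x) ⊔ (y ⊔ (x + y)) := by
  simp only [posPart_def, add_sup, sup_add, add_zero, zero_add]
  ac_rfl

theorem posPart_trapezoid_eq_sum_ramps {α : Type*} [AddCommGroup α] [LinearOrder α]
    [IsOrderedAddMonoid α] {a b d : α} (hda : d ≤ a) (hdb : d ≤ b) (u : α) :
    (u - (d + ((u - b)⁺ + (u - a)⁺)))⁺ =
      (u - d)⁺ - (u - a)⁺ - (u - b)⁺ + (u - (a + b - d))⁺ := by
  simp only [posPart_def]
  grind

theorem integral_posPart_sub {s t p : ℝ} (hsp : s ≤ p) (hpt : p ≤ t) :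
    ∫ u in s..t, (u - p)⁺ = (t - p) ^ 2 / 2 := by
  have hint (x y : ℝ) : IntervalIntegrable (fun u ↦ (u - p)⁺) MeasureTheory.volume x y :=
    Continuous.intervalIntegrable (by fun_prop) x y
  have left_eq_zero : ∫ u in s..p, (u - p)⁺ = 0 := by
    refine intervalIntegral.integral_zero_ae (.of_forall fun u hu ↦ ?_)
    rw [Set.uIoc_of_le hsp] at hu
    exact posPart_eq_zero.2 (sub_nonpos.2 hu.2)
  have right_eq : ∫ u in p..t, (u - p)⁺ = (t - p) ^ 2 / 2 := calc
    ∫ u in p..t, (u - p)⁺ = ∫ u in p..t, (u - p) := by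
      refine intervalIntegral.integral_congr fun u hu ↦ ?_
      rw [Set.uIcc_of_le hpt] at hu
      exact posPart_eq_self.2 (sub_nonneg.2 hu.1)
    _ = (t - p) ^ 2 / 2 := by
      rw [intervalIntegral.integral_comp_sub_right (fun x ↦ x), integral_id]
      ring
  rw [← intervalIntegral.integral_add_adjacent_intervals (hint s p) (hint p t),
    left_eq_zero, right_eq, zero_add]

theorem integral_posPart_trapezoid {s t a b d : ℝ} (hsd : s ≤ d) (hda : d ≤ a) (hdb : d ≤ b)
    (hdt : a + b - d ≤ t) :
    ∫ u in s..t, (u - (d + ((u - b)⁺ + (u - a)⁺)))⁺ = (a - d) * (b - d) := by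
  have hint (p : ℝ) : IntervalIntegrable (fun u ↦ (u - p)⁺) MeasureTheory.volume s t :=
    Continuous.intervalIntegrable (by fun_prop) s t
  simp only [posPart_trapezoid_eq_sum_ramps hda hdb]
  rw [intervalIntegral.integral_add (((hint d).sub (hint a)).sub (hint b)) (hint _),
    intervalIntegral.integral_sub ((hint d).sub (hint a)) (hint b),
    intervalIntegral.integral_sub (hint d) (hint a),
    integral_posPart_sub hsd (by linarith), integral_posPart_sub (by linarith) (by linarith),
    integral_posPart_sub (by linarith) (by linarith), integral_posPart_sub (by linarith) hdt]
  ring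

theorem CUp_eq_min_add_posPart (a b c u v : ℝ) :
    CUp a b c u v = min (min u v) (min a b - c + ((u - b)⁺ + (v - a)⁺)) := by
  rw [CUp, posPart_add_posPart_eq_sup, add_sup, add_sup, add_sup]
  congr 3 <;> ring_nf

theorem CUp_self_eq_sub_posPart (a b c u : ℝ) :
    CUp a b c u u = u - (u - (min a b - c + ((u - b)⁺ + (u - a)⁺)))⁺ := by
  rw [CUp_eq_min_add_posPart, min_self, inf_eq_sub_posPart_sub]

theorem integral_CUp_self {s t a b c : ℝ} (hc : 0 ≤ c) (hs : s ≤ min a b - c)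
    (ht : max a b + c ≤ t) :
    ∫ u in s..t, CUp a b c u u =
      (t ^ 2 - s ^ 2) / 2 - (a - (min a b - c)) * (b - (min a b - c)) := by
  have le_left : min a b - c ≤ a := by linarith [min_le_left a b]
  have le_right : min a b - c ≤ b := by linarith [min_le_right a b]
  have last_corner_le : a + b - (min a b - c) ≤ t := by linarith [min_add_max a b]
  simp only [CUp_self_eq_sub_posPart]
  rw [intervalIntegral.integral_sub (Continuous.intervalIntegrable (by fun_prop) s t)
      (Continuous.intervalIntegrable (by fun_prop) s t),
    integral_id, integral_posPart_trapezoid hs le_left le_right last_corner_le]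

theorem Q_M_CUp_general (a b c : ℝ) (hc0 : 0 ≤ c)
    (hc : c ≤ min (min a b) (min (1 - a) (1 - b))) (d₂ : ℝ) (hd : d₂ = min a b - c) :
    4 * (∫ u in (0:ℝ)..1, CUp a b c u u) - 1 = 1 - 4 * (a - d₂) * (b - d₂) ∧
    (∫ u in (0:ℝ)..1, CUp a b c u u) = 1 / 2 - (a - d₂) * (b - d₂) := by
  rw [min_sub_sub_left, le_min_iff] at hc
  have integral_eq : ∫ u in (0:ℝ)..1, CUp a b c u u = 1 / 2 - (a - d₂) * (b - d₂) := by
    rw [integral_CUp_self hc0 (by linarith) (by linarith), hd]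
    norm_num
  exact ⟨by rw [integral_eq]; ring, integral_eq⟩

/-- `Q(M, C̄^{b,a,c}) = 1 − 4(a−d₂)(b−d₂)`, where `M` is the upper Fréchet–Hoeffding
copula whose mass lies on the diagonal; equivalently
`∫₀¹ C̄^{b,a,c}(u,u) du = 1/2 − (a−d₂)(b−d₂)`. -/
theorem Q_M_CUp (a b c : ℝ) (ha : a ∈ Set.Icc (0:ℝ) 1) (hb : b ∈ Set.Icc (0:ℝ) 1)
    (hc0 : 0 ≤ c)
    (hc : c ≤ min (min a b) (min (min (1 - a) (1 - b)) |b - a|))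
    (d₂ : ℝ) (hd : d₂ = min a b - c) :
    4 * (∫ u in (0:ℝ)..1, CUp a b c u u) - 1 = 1 - 4 * (a - d₂) * (b - d₂) ∧
    (∫ u in (0:ℝ)..1, CUp a b c u u) = 1 / 2 - (a - d₂) * (b - d₂) :=
  Q_M_CUp_general a b c hc0 (hc.trans (min_le_min_left _ (min_le_left _ _))) d₂ hd
end
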